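/- arXiv:1211.1353 — 2 statements merged into one kernel-verified Lean document; each statement's English description precedes it below -/
import Mathlib

section
/- For a number field F of degree f over ℚ and any real Y > 1, the number of integral ideals of the ring of integers of F with absolute norm less than Y is at most e·Y·(1 + log Y)^f. -/
open NumberField

theorem aux_prime (F : Type*) [Field F] [NumberField F] (P : Ideal (𝓞 F)) (hP : P.IsPrime)
    (h0 : P ≠ ⊥) : ∃ p n : ℕ, 0 < n ∧ (p : 𝓞 F) ∈ P ∧ p.Prime ∧ P.absNorm = p ^ n ∧
      P.absNorm.minFac = p := by
  have : P.IsMaximal := hP.isMaximal h0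
  obtain ⟨p, n, hn, hm, hp, he⟩ := Ideal.exists_prime_and_absNorm_eq_pow P
  refine ⟨p, n, hn, hm, hp, he, ?_⟩
  rw [he, hp.pow_minFac hn.ne']

theorem aux_over (F : Type*) [Field F] [NumberField F] (p : ℕ) (hp : p.Prime) :
    ∃ T : Finset (Ideal (𝓞 F)), T.card ≤ Module.finrank ℚ F ∧
      ∀ P : Ideal (𝓞 F), P.IsPrime → (p : 𝓞 F) ∈ P → P ∈ T := by
  have hpi : Prime (p : ℤ) := Nat.prime_iff_prime_int.mp hp
  have hb : Ideal.span {(p : ℤ)} ≠ ⊥ := by simpa using hp.ne_zero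
  have hpr : (Ideal.span {(p : ℤ)}).IsPrime :=
    (Ideal.span_singleton_prime hpi.ne_zero).2 hpi
  have hmax : (Ideal.span {(p : ℤ)}).IsMaximal := hpr.isMaximal hb
  refine ⟨IsDedekindDomain.primesOverFinset (Ideal.span {(p : ℤ)}) (𝓞 F),
    Ideal.card_primesOverFinset_le_finrank (𝓞 F) ℚ F hb, ?_⟩
  intro P hP hm
  rw [IsDedekindDomain.mem_primesOverFinset_iff hb]
  refine ⟨hP, ⟨hmax.eq_of_le (Ideal.IsPrime.under ℤ P).ne_top ?_⟩⟩
  rw [Ideal.span_singleton_le_iff_mem, Ideal.mem_comap]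
  simpa using hm

theorem aux_idx (F : Type*) [Field F] [NumberField F] :
    ∃ ι : Ideal (𝓞 F) → Fin (Module.finrank ℚ F), ∀ P Q : Ideal (𝓞 F),
      P.IsPrime → P ≠ ⊥ → Q.IsPrime → Q ≠ ⊥ → P.absNorm.minFac = Q.absNorm.minFac →
      ι P = ι Q → P = Q := by
  classical
  have hpos : 0 < Module.finrank ℚ F := Module.finrank_pos
  have h : ∀ p : ℕ, ∃ g : Ideal (𝓞 F) → Fin (Module.finrank ℚ F), p.Prime →
      ∀ P Q : Ideal (𝓞 F), P.IsPrime → Q.IsPrime → (p : 𝓞 F) ∈ P → (p : 𝓞 F) ∈ Q →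
      g P = g Q → P = Q := by
    intro p
    by_cases hp : p.Prime
    · obtain ⟨T, hT, hmem⟩ := aux_over F p hp
      refine ⟨fun P => if h : P ∈ T then Fin.castLE hT (T.equivFin ⟨P, h⟩) else ⟨0, hpos⟩, ?_⟩
      intro _ P Q hP hQ h1 h2 h
      have a := hmem P hP h1
      have b := hmem Q hQ h2
      simpa [a, b] using h
    · exact ⟨fun _ => ⟨0, hpos⟩, fun h => absurd h hp⟩
  choose g hg using h
  refine ⟨fun P => g P.absNorm.minFac P, ?_⟩
  intro P Q hP hP0 hQ hQ0 he hi
  obtain ⟨p, n, _, hm, hp, _, hpe⟩ := aux_prime F P hP hP0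
  obtain ⟨q, m, _, hmq, hq, _, hqe⟩ := aux_prime F Q hQ hQ0
  have : q = p := by rw [← hpe, ← hqe, he]
  subst this
  simp only [hpe, hqe] at hi
  exact hg q hp P Q hP hQ hm hmq hi

theorem aux_inj (F : Type*) [Field F] [NumberField F] :
    ∃ Φ : Ideal (𝓞 F) → Fin (Module.finrank ℚ F) → ℕ,
      (∀ I, I ≠ ⊥ → ∏ i, Φ I i = I.absNorm) ∧
      (∀ I J, I ≠ ⊥ → J ≠ ⊥ → Φ I = Φ J → I = J) := by
  classical
  obtain ⟨ι, hι⟩ := aux_idx F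
  let N : Multiset (Ideal (𝓞 F)) → Fin (Module.finrank ℚ F) → ℕ :=
    fun s i => (s.map (fun P => if ι P = i then P.absNorm else 1)).prod
  have hprod : ∀ s, ∏ i, N s i = (s.map Ideal.absNorm).prod := by
    intro s
    induction s using Multiset.induction_on with
    | empty => simp [N]
    | cons P s ih =>
      simp only [N, Multiset.map_cons, Multiset.prod_cons, Finset.prod_mul_distrib] at ih ⊢
      rw [ih]
      simp
  have hval : ∀ s : Multiset (Ideal (𝓞 F)), (∀ Q ∈ s, Q.IsPrime ∧ Q ≠ ⊥) →
      ∀ P : Ideal (𝓞 F), P.IsPrime → P ≠ ⊥ → N s (ι P) ≠ 0 ∧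
      (N s (ι P)).factorization P.absNorm.minFac =
        s.count P * P.absNorm.factorization P.absNorm.minFac := by
    intro s
    induction s using Multiset.induction_on with
    | empty => simp [N]
    | cons Q s ih =>
      intro hs P hP hP0
      obtain ⟨h1, h2⟩ := ih (fun Q hQ => hs Q (Multiset.mem_cons_of_mem hQ)) P hP hP0
      obtain ⟨hQ, hQ0⟩ := hs Q (Multiset.mem_cons_self _ _)
      have hc : N (Q ::ₘ s) (ι P) = (if ι Q = ι P then Q.absNorm else 1) * N s (ι P) := by
        simp [N]
      have hQn : Q.absNorm ≠ 0 := fun h => hQ0 (Ideal.absNorm_eq_zero_iff.1 h)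
      have hne : (if ι Q = ι P then Q.absNorm else 1) ≠ 0 := by split_ifs <;> simp [hQn]
      rw [hc]
      refine ⟨mul_ne_zero hne h1, ?_⟩
      rw [Nat.factorization_mul hne h1, Finsupp.add_apply, h2, Multiset.count_cons]
      by_cases hPQ : P = Q
      · subst hPQ
        simp only [if_true]
        ring
      · rw [if_neg hPQ, add_zero]
        suffices (if ι Q = ι P then Q.absNorm else 1).factorization P.absNorm.minFac = 0 by
          rw [this, zero_add]
        split_ifs with hi
        · obtain ⟨p, n, _, _, hp, _, hpe⟩ := aux_prime F P hP hP0
          obtain ⟨q, m, _, _, hq, hqn, hqe⟩ := aux_prime F Q hQ hQ0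
          have hpq : q ≠ p := by
            intro h
            exact hPQ (hι P Q hP hP0 hQ hQ0 (by rw [hpe, hqe, h]) hi.symm)
          rw [hpe, hqn, hq.factorization_pow]
          exact Finsupp.single_eq_of_ne hpq.symm
        · simp
  have hfac : ∀ I : Ideal (𝓞 F), ∀ Q ∈ UniqueFactorizationMonoid.normalizedFactors I,
      Q.IsPrime ∧ Q ≠ ⊥ := by
    intro I Q hQ
    have := UniqueFactorizationMonoid.prime_of_normalized_factor Q hQ
    exact ⟨Ideal.isPrime_of_prime this, this.ne_zero⟩
  have hpI : ∀ I : Ideal (𝓞 F), I ≠ ⊥ →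
      (UniqueFactorizationMonoid.normalizedFactors I).prod = I := fun I hI =>
    Ideal.prod_normalizedFactors_eq_self hI
  refine ⟨fun I => N (UniqueFactorizationMonoid.normalizedFactors I), ?_, ?_⟩
  · intro I hI
    rw [hprod, ← map_multiset_prod, hpI I hI]
  · intro I J hI hJ h
    simp only at h
    rw [← hpI I hI, ← hpI J hJ]
    congr 1
    ext P
    by_cases hP : P.IsPrime ∧ P ≠ ⊥
    · have a := (hval _ (hfac I) P hP.1 hP.2).2
      have b := (hval _ (hfac J) P hP.1 hP.2).2
      rw [h, b] at a
      obtain ⟨p, n, hn, _, hp, he, hpe⟩ := aux_prime F P hP.1 hP.2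
      refine (Nat.eq_of_mul_eq_mul_right ?_ a).symm
      rw [hpe, he, hp.factorization_pow]
      simpa using hn
    · rw [Multiset.count_eq_zero_of_notMem (fun h => hP (hfac _ _ h)),
        Multiset.count_eq_zero_of_notMem (fun h => hP (hfac _ _ h))]

/-- For a number field `F` of degree `f` over `ℚ` and any real `Y > 1`, the number of
nonzero integral ideals of `𝒪_F` with absolute norm less than `Y` is at most
`e·Y·(1 + log Y)^f`. -/
theorem stmt_0 (F : Type*) [Field F] [NumberField F] (f : ℕ)
    (hf : Module.finrank ℚ F = f) (Y : ℝ) (hY : 1 < Y) :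
    (Nat.card {I : Ideal (𝓞 F) // I ≠ ⊥ ∧ (Ideal.absNorm I : ℝ) < Y} : ℝ) ≤
      Real.exp 1 * Y * (1 + Real.log Y) ^ f := by
  classical
  obtain ⟨Φ, hΦ, hinj⟩ := aux_inj F
  subst hf
  have hfin : {I : Ideal (𝓞 F) | I ≠ ⊥ ∧ (Ideal.absNorm I : ℝ) < Y}.Finite := by
    refine (Ideal.finite_setOfPred_absNorm_le (S := 𝓞 F) ⌊Y⌋₊).subset ?_
    rintro I ⟨_, h⟩
    exact Nat.le_floor h.le
  have hcard : Nat.card {I : Ideal (𝓞 F) // I ≠ ⊥ ∧ (Ideal.absNorm I : ℝ) < Y} =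
      hfin.toFinset.card := Nat.card_eq_card_finite_toFinset hfin
  have hmem : ∀ I, I ∈ hfin.toFinset ↔ I ≠ ⊥ ∧ (Ideal.absNorm I : ℝ) < Y := by
    intro I; simp
  rw [hcard]
  have hlog : 0 < Real.log Y := Real.log_pos hY
  have hY0 : 0 < Y := by linarith
  have key : (hfin.toFinset.card : ℝ) ≤ Y * (1 + Real.log Y) ^ (Module.finrank ℚ F) := by
    calc (hfin.toFinset.card : ℝ) = ∑ I ∈ hfin.toFinset, (1 : ℝ) := by simp
      _ ≤ ∑ I ∈ hfin.toFinset, Y * ∏ i, ((Φ I i : ℝ))⁻¹ := by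
        refine Finset.sum_le_sum fun I hI => ?_
        obtain ⟨h0, hlt⟩ := (hmem I).1 hI
        have hn : (0 : ℝ) < I.absNorm := by
          exact_mod_cast Nat.pos_of_ne_zero fun h => h0 (Ideal.absNorm_eq_zero_iff.1 h)
        rw [Finset.prod_inv_distrib, ← Nat.cast_prod, hΦ I h0, ← div_eq_mul_inv, one_le_div hn]
        exact hlt.le
      _ = ∑ n ∈ hfin.toFinset.image Φ, Y * ∏ i, ((n i : ℝ))⁻¹ := by
        rw [Finset.sum_image]
        intro I hI J hJ h
        exact hinj I J ((hmem I).1 hI).1 ((hmem J).1 hJ).1 h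
      _ ≤ ∑ n ∈ Fintype.piFinset fun _ : Fin (Module.finrank ℚ F) => Finset.Icc 1 ⌊Y⌋₊,
            Y * ∏ i, ((n i : ℝ))⁻¹ := by
        refine Finset.sum_le_sum_of_subset_of_nonneg ?_ fun _ _ _ => by positivity
        intro n hn
        obtain ⟨I, hI, rfl⟩ := Finset.mem_image.1 hn
        obtain ⟨h0, hlt⟩ := (hmem I).1 hI
        have hn : 0 < I.absNorm := 
          Nat.pos_of_ne_zero fun h => h0 (Ideal.absNorm_eq_zero_iff.1 h)
        rw [Fintype.mem_piFinset]
        intro i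
        have hd : Φ I i ∣ I.absNorm := by
          rw [← hΦ I h0]; exact Finset.dvd_prod_of_mem _ (Finset.mem_univ i)
        rw [Finset.mem_Icc]
        exact ⟨Nat.pos_of_dvd_of_pos hd hn, (Nat.le_of_dvd hn hd).trans (Nat.le_floor hlt.le)⟩
      _ = Y * (harmonic ⌊Y⌋₊ : ℝ) ^ (Module.finrank ℚ F) := by
        rw [← Finset.mul_sum, harmonic_eq_sum_Icc]
        push_cast
        rw [Finset.sum_pow']
      _ ≤ _ := by
        have := harmonic_floor_le_one_add_log Y hY.le
        have h0 : (0 : ℝ) ≤ harmonic ⌊Y⌋₊ := by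
          rw [harmonic_eq_sum_Icc]; push_cast; positivity
        gcongr
  refine key.trans ?_
  have : (1 : ℝ) ≤ Real.exp 1 := Real.one_le_exp zero_le_one
  have h2 : 0 ≤ Y * (1 + Real.log Y) ^ (Module.finrank ℚ F) := by positivity
  rw [mul_assoc]
  exact le_mul_of_one_le_left h2 this
end

section
/- Let G be a finite group all of whose irreducible complex representations have degree at most r. Then G has an abelian subgroup of index at most (r!)². -/
namespace JT

section basics

variable {G : Type} [Group G] {V : Type} [AddCommGroup V] [Module ℂ V]

def Inv (ρ : Representation ℂ G V) (H : Subgroup G) (W : Submodule ℂ V) : Prop :=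
  ∀ h ∈ H, ∀ w ∈ W, ρ h w ∈ W

def IrrOn (ρ : Representation ℂ G V) (H : Subgroup G) (P : Submodule ℂ V) : Prop :=
  P ≠ ⊥ ∧ Inv ρ H P ∧ ∀ W ≤ P, Inv ρ H W → W = ⊥ ∨ W = P

lemma Inv.mono {ρ : Representation ℂ G V} {H K : Subgroup G} {W : Submodule ℂ V}
    (h : Inv ρ H W) (hk : K ≤ H) : Inv ρ K W := fun g hg => h g (hk hg)

lemma Inv.inf {ρ : Representation ℂ G V} {H : Subgroup G} {W X : Submodule ℂ V}
    (h : Inv ρ H W) (hk : Inv ρ H X) : Inv ρ H (W ⊓ X) :=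
  fun g hg w hw => ⟨h g hg w hw.1, hk g hg w hw.2⟩

lemma inv_top (ρ : Representation ℂ G V) (H : Subgroup G) : Inv ρ H ⊤ :=
  fun _ _ _ _ => trivial

/-- irreducible on a smaller subgroup implies irreducible on a bigger one -/
lemma IrrOn.up {ρ : Representation ℂ G V} {H K : Subgroup G} {P : Submodule ℂ V}
    (h : IrrOn ρ K P) (hk : K ≤ H) (hP : Inv ρ H P) : IrrOn ρ H P :=
  ⟨h.1, hP, fun W hW hi => h.2.2 W hW (hi.mono hk)⟩

lemma rho_inv_mul (ρ : Representation ℂ G V) (g : G) (v : V) : ρ g⁻¹ (ρ g v) = v := by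
  rw [← Module.End.mul_apply, ← map_mul]; simp

lemma rho_mul_inv (ρ : Representation ℂ G V) (g : G) (v : V) : ρ g (ρ g⁻¹ v) = v := by
  rw [← Module.End.mul_apply, ← map_mul]; simp

lemma rho_mul (ρ : Representation ℂ G V) (g h : G) (v : V) : ρ (g * h) v = ρ g (ρ h v) := by
  rw [map_mul]; rfl

lemma rho_inj (ρ : Representation ℂ G V) (g : G) {v : V} (h : ρ g v = 0) : v = 0 := by
  rw [← rho_inv_mul ρ g v, h, map_zero]

lemma exists_irr [FiniteDimensional ℂ V] (ρ : Representation ℂ G V) (H : Subgroup G) :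
    ∀ (n : ℕ) (W : Submodule ℂ V), Module.finrank ℂ W ≤ n → Inv ρ H W → W ≠ ⊥ →
      ∃ P ≤ W, IrrOn ρ H P := by
  intro n
  induction n with
  | zero =>
    intro W hn _ hb
    exact absurd (Submodule.finrank_eq_zero.mp (Nat.le_zero.mp hn)) hb
  | succ n ih =>
    intro W hn hi hb
    by_cases h : ∃ X ≤ W, Inv ρ H X ∧ X ≠ ⊥ ∧ X ≠ W
    · obtain ⟨X, hXW, hX, hX0, hX1⟩ := h
      have : Module.finrank ℂ X < Module.finrank ℂ W :=
        Submodule.finrank_lt_finrank_of_lt (lt_of_le_of_ne hXW hX1)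
      obtain ⟨P, hP, hP'⟩ := ih X (by omega) hX hX0
      exact ⟨P, hP.trans hXW, hP'⟩
    · push Not at h
      refine ⟨W, le_rfl, hb, hi, fun X hX hXi => ?_⟩
      by_cases h0 : X = ⊥
      · exact Or.inl h0
      · exact Or.inr (h X hX hXi h0)

lemma exists_irr' [FiniteDimensional ℂ V] (ρ : Representation ℂ G V) (H : Subgroup G)
    (W : Submodule ℂ V) (hi : Inv ρ H W) (hb : W ≠ ⊥) : ∃ P ≤ W, IrrOn ρ H P :=
  exists_irr ρ H _ W le_rfl hi hb

lemma exists_compl [Finite G] (ρ : Representation ℂ G V) (H : Subgroup G)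
    (S : Submodule ℂ V) (hS : Inv ρ H S) : ∃ C : Submodule ℂ V, Inv ρ H C ∧ IsCompl S C := by
  classical
  have : Fintype H := Fintype.ofFinite H
  obtain ⟨f, hf⟩ := S.subtype.exists_leftInverse_of_injective (by simp)
  have hf' : ∀ s : S, f s = s := fun s => by
    have := LinearMap.congr_fun hf s
    simpa using this
  let q : V →ₗ[ℂ] V := ∑ h : H, ρ (h : G) ∘ₗ (S.subtype ∘ₗ f) ∘ₗ ρ (h : G)⁻¹
  have hq : ∀ v, q v = ∑ h : H, ρ (h : G) (f (ρ (h : G)⁻¹ v)) := fun v => by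
    simp [q, LinearMap.sum_apply]
  have hc : (Fintype.card H : ℂ) ≠ 0 := by
    exact_mod_cast Fintype.card_ne_zero
  have h1 : ∀ v, q v ∈ S := fun v => by
    rw [hq]
    exact Submodule.sum_mem _ fun h _ => hS h h.2 _ (f _).2
  have h2 : ∀ v ∈ S, q v = (Fintype.card H : ℂ) • v := fun v hv => by
    rw [hq]
    have : ∀ h : H, ρ (h : G) (f (ρ (h : G)⁻¹ v) : V) = v := fun h => by
      have h3 : ρ (h : G)⁻¹ v ∈ S := hS _ (H.inv_mem h.2) v hv
      have h4 := hf' ⟨_, h3⟩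
      simp only at h4
      rw [h4]
      exact rho_mul_inv ρ _ v
    simp [this, Finset.sum_const, Nat.cast_smul_eq_nsmul]
  have h3 : ∀ k ∈ H, ∀ v, q (ρ k v) = ρ k (q v) := fun k hk v => by
    rw [hq, hq, map_sum]
    refine Fintype.sum_equiv (Equiv.mulLeft (⟨k, hk⟩⁻¹ : H)) _ _ fun h => ?_
    simp only [Equiv.coe_mulLeft, Subgroup.coe_mul, Subgroup.coe_inv, mul_inv_rev, inv_inv]
    rw [← rho_mul, ← rho_mul]
    simp
  refine ⟨LinearMap.ker q, fun h hh w hw => ?_, ?_⟩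
  · rw [LinearMap.mem_ker] at hw ⊢
    rw [h3 h hh, hw, map_zero]
  · constructor
    · rw [Submodule.disjoint_def]
      intro v hv hk
      rw [LinearMap.mem_ker, h2 v hv] at hk
      exact (smul_eq_zero.mp hk).resolve_left hc
    · rw [codisjoint_iff, eq_top_iff]
      intro v _
      have : v = (Fintype.card H : ℂ)⁻¹ • q v + (v - (Fintype.card H : ℂ)⁻¹ • q v) := by abel
      rw [this]
      refine Submodule.add_mem_sup (S.smul_mem _ (h1 v)) ?_
      rw [LinearMap.mem_ker, map_sub, map_smul, h2 _ (h1 v), smul_smul, inv_mul_cancel₀ hc]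
      simp

lemma maschke [Finite G] [FiniteDimensional ℂ V] (ρ : Representation ℂ G V) (H : Subgroup G)
    (X S : Submodule ℂ V) (hX : Inv ρ H X) (hS : Inv ρ H S)
    (h : ∀ P ≤ X, IrrOn ρ H P → P ≤ S) : X ≤ S := by
  obtain ⟨C, hC, hc⟩ := exists_compl ρ H (S ⊓ X) (hS.inf hX)
  by_cases h0 : C ⊓ X = ⊥
  · have : (S ⊓ X) ⊔ (C ⊓ X) = X := by
      rw [← sup_inf_assoc_of_le C (inf_le_right : S ⊓ X ≤ X), hc.sup_eq_top, top_inf_eq]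
    rw [h0, sup_bot_eq] at this
    exact inf_eq_right.mp this
  · obtain ⟨P, hP, hP'⟩ := exists_irr' ρ H (C ⊓ X) (hC.inf hX) h0
    exfalso
    have h1 := h P (hP.trans inf_le_right) hP'
    apply hP'.1
    rw [eq_bot_iff, ← hc.inf_eq_bot]
    exact le_inf (le_inf h1 (hP.trans inf_le_right)) (hP.trans inf_le_left)

/-- Schur: two equivariant maps to an irreducible space, one bijective -/
lemma schur2 [FiniteDimensional ℂ V] {ρ : Representation ℂ G V} {H : Subgroup G}
    (hI : IrrOn ρ H ⊤) {X : Type} [AddCommGroup X] [Module ℂ X]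
    (e b : X →ₗ[ℂ] V) (he : Function.Bijective e) (σ : G → X → X)
    (h1 : ∀ h ∈ H, ∀ x, e (σ h x) = ρ h (e x)) (h2 : ∀ h ∈ H, ∀ x, b (σ h x) = ρ h (b x)) :
    ∃ c : ℂ, ∀ x, b x = c • e x := by
  have : Nontrivial V := by
    have := hI.1
    by_contra hn
    rw [not_nontrivial_iff_subsingleton] at hn
    exact this (Subsingleton.elim _ _)
  let E := LinearEquiv.ofBijective e he
  have hE : ∀ x, E x = e x := fun x => rfl
  let A : V →ₗ[ℂ] V := b ∘ₗ E.symm.toLinearMap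
  have hA : ∀ h ∈ H, ∀ v, A (ρ h v) = ρ h (A v) := fun h hh v => by
    obtain ⟨x, rfl⟩ := he.2 v
    rw [← h1 h hh]
    simp only [A, LinearMap.comp_apply, LinearEquiv.coe_coe, ← hE, LinearEquiv.symm_apply_apply]
    exact h2 h hh x
  obtain ⟨c, hc⟩ := Module.End.exists_eigenvalue A
  refine ⟨c, fun x => ?_⟩
  have := hI.2.2 (Module.End.eigenspace A c) le_top (fun h hh w hw => by
    rw [Module.End.mem_eigenspace_iff] at hw ⊢
    rw [hA h hh, hw, map_smul])
  rcases this with h | h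
  · exact absurd h hc
  · have : e x ∈ Module.End.eigenspace A c := h ▸ Submodule.mem_top
    rw [Module.End.mem_eigenspace_iff] at this
    rw [← this]
    simp [A, ← hE]

lemma schur [FiniteDimensional ℂ V] {ρ : Representation ℂ G V} {H : Subgroup G}
    (hI : IrrOn ρ H ⊤) (A : V →ₗ[ℂ] V) (h : ∀ h ∈ H, ∀ v, A (ρ h v) = ρ h (A v)) :
    ∃ c : ℂ, ∀ v, A v = c • v :=
  schur2 hI LinearMap.id A Function.bijective_id (fun h v => ρ h v) (fun _ _ _ => rfl) h

/-- The representation of `H` on an `H`-invariant subspace. -/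
def subRep (ρ : Representation ℂ G V) (H : Subgroup G) (P : Submodule ℂ V) (hP : Inv ρ H P) :
    Representation ℂ H P where
  toFun h := (ρ (h : G)).restrict (hP h h.2)
  map_one' := by ext; simp
  map_mul' a b := by ext; simp

@[simp] lemma subRep_apply (ρ : Representation ℂ G V) (H : Subgroup G) (P : Submodule ℂ V)
    (hP : Inv ρ H P) (h : H) (p : P) : (subRep ρ H P hP h p : V) = ρ h p := rfl

lemma IrrOn.sub {ρ : Representation ℂ G V} {H : Subgroup G} {P : Submodule ℂ V}
    (h : IrrOn ρ H P) : IrrOn (subRep ρ H P h.2.1) ⊤ ⊤ := by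
  refine ⟨?_, inv_top _ _, fun W _ hW => ?_⟩
  · intro h0
    apply h.1
    rw [← Submodule.map_subtype_top P, h0, Submodule.map_bot]
  · rcases h.2.2 (W.map P.subtype) (Submodule.map_subtype_le P W) (by
      rintro g hg _ ⟨w, hw, rfl⟩
      exact ⟨_, hW ⟨g, hg⟩ trivial w hw, rfl⟩) with h1 | h1
    · left
      apply Submodule.map_injective_of_injective P.injective_subtype
      rw [h1, Submodule.map_bot]
    · right
      apply Submodule.map_injective_of_injective P.injective_subtype
      rw [h1, Submodule.map_subtype_top]

end basics

def Bnd (G : Type) [Group G] (n : ℕ) : Prop :=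
  ∀ (V : Type) [AddCommGroup V] [Module ℂ V] [FiniteDimensional ℂ V] (ρ : Representation ℂ G V),
    IrrOn ρ ⊤ ⊤ → Module.finrank ℂ V ≤ n

section bnd

variable {G : Type} [Group G] {V : Type} [AddCommGroup V] [Module ℂ V] [FiniteDimensional ℂ V]

lemma Bnd.mono {n m : ℕ} (h : Bnd G n) (hnm : n ≤ m) : Bnd G m :=
  fun V _ _ _ ρ hρ => (h V ρ hρ).trans hnm

lemma Bnd.sub {ρ : Representation ℂ G V} {H : Subgroup G} {n : ℕ} (hb : Bnd H n)
    {P : Submodule ℂ V} (h : IrrOn ρ H P) : Module.finrank ℂ P ≤ n := hb _ _ h.sub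

lemma Bnd.of_mulEquiv {G' : Type} [Group G'] {n : ℕ} (h : Bnd G n) (e : G ≃* G') : Bnd G' n := by
  intro V _ _ _ ρ hρ
  refine h V (ρ.comp e.toMonoidHom) ⟨hρ.1, inv_top _ _, fun W hW hi => hρ.2.2 W hW ?_⟩
  intro g _ w hw
  simpa using hi (e.symm g) trivial w hw

lemma Bnd.top {n : ℕ} (h : Bnd G n) : Bnd (⊤ : Subgroup G) n :=
  h.of_mulEquiv Subgroup.topEquiv.symm

lemma Bnd.irr {ρ : Representation ℂ G V} {n : ℕ} (hb : Bnd G n)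
    {P : Submodule ℂ V} (h : IrrOn ρ ⊤ P) : Module.finrank ℂ P ≤ n := hb.top.sub h

lemma Bnd.ne_zero {n : ℕ} (hb : Bnd G n) : 1 ≤ n := by
  have := hb ℂ (1 : Representation ℂ G ℂ) ⟨bot_ne_top.symm, inv_top _ _, fun W _ _ => ?_⟩
  · simpa using this
  · exact eq_bot_or_eq_top W

end bnd

end JT

namespace JT

section coind

variable {G : Type} [Group G]

/-- right translation -/
def rt (G : Type) [Group G] (W : Type) [AddCommGroup W] [Module ℂ W] : Representation ℂ G (G → W) where
  toFun x := LinearMap.funLeft ℂ W (fun y => y * x)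
  map_one' := by ext; simp [LinearMap.funLeft]
  map_mul' a b := by
    apply LinearMap.ext; intro f; funext y
    simp [LinearMap.funLeft, mul_assoc]

variable {W : Type} [AddCommGroup W] [Module ℂ W]

@[simp] lemma rt_apply (x : G) (f : G → W) (y : G) : rt G W x f y = f (y * x) := rfl

/-- coinduced space -/
def coi (K : Subgroup G) (ρ : Representation ℂ K W) : Submodule ℂ (G → W) where
  carrier := {f | ∀ (k : K) (y : G), f (k * y) = ρ k (f y)}
  add_mem' := by
    intro a b ha hb k y
    simp [ha k y, hb k y]
  zero_mem' := by intro k y; simp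
  smul_mem' := by
    intro c a ha k y
    simp [ha k y]

lemma coi_inv (K : Subgroup G) (ρ : Representation ℂ K W) : Inv (rt G W) ⊤ (coi K ρ) := by
  intro x _ f hf k y
  simp only [rt_apply, mul_assoc]
  exact hf k _

lemma coi_one {K : Subgroup G} {ρ : Representation ℂ K W} {f : G → W} (hf : f ∈ coi K ρ) (k : K) :
    f k = ρ k (f 1) := by
  simpa using hf k 1

/-- function supported on `K x`-/
lemma coi_exists (K : Subgroup G) (ρ : Representation ℂ K W) (x : G) (w : W) :
    ∃ f ∈ coi K ρ, (∀ k : K, f (k * x) = ρ k w) ∧ ∀ y, y * x⁻¹ ∉ K → f y = 0 := by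
  classical
  refine ⟨fun y => if h : y * x⁻¹ ∈ K then ρ ⟨y * x⁻¹, h⟩ w else 0, ?_, ?_, ?_⟩
  · intro k y
    by_cases h : y * x⁻¹ ∈ K
    · have h' : (k : G) * y * x⁻¹ ∈ K := by rw [mul_assoc]; exact K.mul_mem k.2 h
      simp only [h, h', dite_true]
      rw [← rho_mul]
      congr 2
      apply Subtype.ext; simp [mul_assoc]
    · have h' : ¬ (k : G) * y * x⁻¹ ∈ K := by
        rw [mul_assoc]; rwa [K.mul_mem_cancel_left k.2]
      simp only [h, h', dite_false, map_zero]
  · intro k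
    simp
  · intro y hy
    simp [hy]

lemma coi_ne_bot [Nontrivial W] (K : Subgroup G) (ρ : Representation ℂ K W) : coi K ρ ≠ ⊥ := by
  obtain ⟨w, hw⟩ := exists_ne (0 : W)
  obtain ⟨f, hf, h1, -⟩ := coi_exists K ρ 1 w
  intro h
  rw [h, Submodule.mem_bot] at hf
  have := h1 1
  simp [hf] at this
  exact hw this.symm

lemma IrrOn.nontrivial {ρ : Representation ℂ G W} {H : Subgroup G} (h : IrrOn ρ H ⊤) :
    Nontrivial W := by
  by_contra hn
  rw [not_nontrivial_iff_subsingleton] at hn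
  exact h.1 (Subsingleton.elim _ _)

/-- evaluation at one is surjective on any nonzero invariant subspace. -/
lemma ev_surj {K : Subgroup G} {ρ : Representation ℂ K W} (hρ : IrrOn ρ ⊤ ⊤)
    {P : Submodule ℂ (G → W)} (hP : P ≤ coi K ρ) (hi : Inv (rt G W) ⊤ P) (h0 : P ≠ ⊥) :
    ∀ w, ∃ f ∈ P, f 1 = w := by
  have := hρ.2.2 (P.map (LinearMap.proj (R := ℂ) (φ := fun _ : G => W) 1)) le_top (by
    rintro k - _ ⟨f, hf, rfl⟩
    refine ⟨rt G W k f, hi _ trivial f hf, ?_⟩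
    simp only [LinearMap.proj_apply, rt_apply, one_mul]
    exact coi_one (hP hf) k)
  rcases this with h | h
  · exfalso; apply h0
    rw [eq_bot_iff]
    intro f hf
    rw [Submodule.mem_bot]
    funext y
    have : rt G W y f 1 ∈ P.map (LinearMap.proj (R := ℂ) (φ := fun _ : G => W) 1) :=
      ⟨_, hi y trivial f hf, rfl⟩
    rw [h, Submodule.mem_bot] at this
    simpa using this
  · intro w
    have : w ∈ P.map (LinearMap.proj (R := ℂ) (φ := fun _ : G => W) 1) := h ▸ Submodule.mem_top
    obtain ⟨f, hf, rfl⟩ := this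
    exact ⟨f, hf, rfl⟩

/-- evaluation at one as a map on `P`. -/
def ev1 (P : Submodule ℂ (G → W)) : P →ₗ[ℂ] W :=
  (LinearMap.proj (R := ℂ) (φ := fun _ : G => W) 1) ∘ₗ P.subtype

@[simp] lemma ev1_apply (P : Submodule ℂ (G → W)) (f : P) : ev1 P f = (f : G → W) 1 := rfl

variable [Finite G] [FiniteDimensional ℂ W]

lemma ev1_surj {K : Subgroup G} {ρ : Representation ℂ K W} (hρ : IrrOn ρ ⊤ ⊤)
    {P : Submodule ℂ (G → W)} (hP : P ≤ coi K ρ) (hi : IrrOn (rt G W) ⊤ P) :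
    Function.Surjective (ev1 P) := by
  intro w
  obtain ⟨f, hf, h⟩ := ev_surj hρ hP hi.2.1 hi.1 w
  exact ⟨⟨f, hf⟩, h⟩

lemma coi_exists_irr (K : Subgroup G) (ρ : Representation ℂ K W) (hρ : IrrOn ρ ⊤ ⊤) :
    ∃ P ≤ coi K ρ, IrrOn (rt G W) ⊤ P := by
  have := hρ.nontrivial
  exact exists_irr' _ _ _ (coi_inv K ρ) (coi_ne_bot K ρ)

lemma Bnd.subgroup {n : ℕ} (h : Bnd G n) (K : Subgroup G) : Bnd K n := by
  intro W _ _ _ ρ hρ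
  obtain ⟨P, hP, hi⟩ := coi_exists_irr K ρ hρ
  exact (LinearMap.finrank_le_finrank_of_surjective (ev1_surj hρ hP hi)).trans (h.irr hi)

lemma ev1_bij {n : ℕ} (h : Bnd G n) {K : Subgroup G} {ρ : Representation ℂ K W}
    (hρ : IrrOn ρ ⊤ ⊤) (hn : n ≤ Module.finrank ℂ W)
    {P : Submodule ℂ (G → W)} (hP : P ≤ coi K ρ) (hi : IrrOn (rt G W) ⊤ P) :
    Function.Bijective (ev1 P) := by
  have hs := ev1_surj hρ hP hi
  have h1 := LinearMap.finrank_le_finrank_of_surjective hs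
  have h2 := h.irr hi
  refine ⟨(LinearMap.injective_iff_surjective_of_finrank_eq_finrank (by omega)).mpr hs, hs⟩

lemma Bnd.subgroup_le {n : ℕ} {H K : Subgroup G} (h : Bnd H n) (hk : K ≤ H) : Bnd K n :=
  (h.subgroup (K.subgroupOf H)).of_mulEquiv (Subgroup.subgroupOfEquivOfLe hk)

/-- restriction to a subgroup -/
def resRep (ρ : Representation ℂ G W) (K : Subgroup G) : Representation ℂ K W := ρ.comp K.subtype

omit [Finite G] [FiniteDimensional ℂ W] in
@[simp] lemma resRep_apply (ρ : Representation ℂ G W) (K : Subgroup G) (k : K) :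
  resRep ρ K k = ρ k := rfl

omit [Finite G] [FiniteDimensional ℂ W] in
lemma irr_res {ρ : Representation ℂ G W} {K : Subgroup G} :
    IrrOn (resRep ρ K) ⊤ ⊤ ↔ IrrOn ρ K ⊤ := by
  constructor
  · intro h
    refine ⟨h.1, inv_top _ _, fun W hW hi => h.2.2 W hW fun k _ w hw => hi k k.2 w hw⟩
  · intro h
    refine ⟨h.1, inv_top _ _, fun W hW hi => h.2.2 W hW fun k hk w hw => hi ⟨k, hk⟩ trivial w hw⟩

/-- lemma F: a bad subgroup supports a `G`-representation of degree `n` irreducible on `K`. -/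
lemma bad {n : ℕ} (h : Bnd G n) {K : Subgroup G} (hK : ¬ Bnd K (n - 1)) :
    ∃ (V : Type) (_ : AddCommGroup V) (_ : Module ℂ V) (_ : FiniteDimensional ℂ V)
      (ρ : Representation ℂ G V), Module.finrank ℂ V = n ∧ IrrOn ρ K ⊤ := by
  unfold Bnd at hK
  push Not at hK
  obtain ⟨W, _, _, _, ρ, hρ, hlt⟩ := hK
  obtain ⟨P, hP, hi⟩ := coi_exists_irr K ρ hρ
  have hb := ev1_bij h hρ (by omega) hP hi
  have h1 := LinearMap.finrank_le_finrank_of_surjective hb.2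
  have h2 := h.irr hi
  let τ := (subRep (rt G W) ⊤ P hi.2.1).comp (Subgroup.topEquiv.symm.toMonoidHom : G →* _)
  have hτ : ∀ (g : G) (p : P), (τ g p : G → W) = rt G W g p := fun g p => rfl
  have : Nontrivial P := hi.sub.nontrivial
  refine ⟨P, inferInstance, inferInstance, inferInstance, τ, by omega, ?_, inv_top _ _, ?_⟩
  · exact bot_ne_top.symm
  · intro X _ hX
    rcases hρ.2.2 (X.map (ev1 P)) le_top (by
      rintro k - _ ⟨x, hx, rfl⟩
      refine ⟨τ k x, hX k k.2 x hx, ?_⟩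
      rw [ev1_apply, hτ, rt_apply, one_mul]
      exact coi_one (hP x.2) k) with h | h
    · left
      apply Submodule.map_injective_of_injective hb.1
      rw [h, Submodule.map_bot]
    · right
      apply Submodule.map_injective_of_injective hb.1
      rw [h, Submodule.map_top, LinearMap.range_eq_top.mpr hb.2]

end coind

section lemI

variable {G : Type} [Group G] [Finite G] {V : Type} [AddCommGroup V] [Module ℂ V]
  [FiniteDimensional ℂ V]

/-- operators commuting with right translation act by scalars on irreducible subspaces -/
lemma lemI {n : ℕ} (h : Bnd G n) {K : Subgroup G} {ρ : Representation ℂ K V}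
    (hρ : IrrOn ρ ⊤ ⊤) (hn : n ≤ Module.finrank ℂ V)
    {P : Submodule ℂ (G → V)} (hP : P ≤ coi K ρ) (hi : IrrOn (rt G V) ⊤ P)
    (A : (G → V) →ₗ[ℂ] (G → V)) (hA : ∀ f ∈ coi K ρ, A f ∈ coi K ρ)
    (hR : ∀ x f, A (rt G V x f) = rt G V x (A f)) :
    ∃ c : ℂ, ∀ f ∈ P, A f = c • f := by
  have hb := ev1_bij h hρ hn hP hi
  obtain ⟨c, hc⟩ := schur2 hρ (ev1 P)
    ((LinearMap.proj (R := ℂ) (φ := fun _ : G => V) 1) ∘ₗ A ∘ₗ P.subtype) hb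
    (fun k f => ⟨rt G V k f, hi.2.1 _ trivial _ f.2⟩)
    (fun k _ f => by
      simp only [ev1_apply, rt_apply, one_mul]
      exact coi_one (hP f.2) k)
    (fun k _ f => by
      simp only [LinearMap.comp_apply, Submodule.subtype_apply, LinearMap.proj_apply, hR]
      simp only [rt_apply, one_mul]
      exact coi_one (hA _ (hP f.2)) k)
  refine ⟨c, fun f hf => ?_⟩
  funext y
  have := hc ⟨rt G V y f, hi.2.1 _ trivial _ hf⟩
  simp only [LinearMap.comp_apply, Submodule.subtype_apply, LinearMap.proj_apply, hR] at this
  simpa using this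

lemma lemI_comm {n : ℕ} (h : Bnd G n) {K : Subgroup G} {ρ : Representation ℂ K V}
    (hρ : IrrOn ρ ⊤ ⊤) (hn : n ≤ Module.finrank ℂ V)
    (A B : (G → V) →ₗ[ℂ] (G → V)) (hA : ∀ f ∈ coi K ρ, A f ∈ coi K ρ)
    (hR : ∀ x f, A (rt G V x f) = rt G V x (A f))
    (hB : ∀ f ∈ coi K ρ, B f ∈ coi K ρ)
    (hRB : ∀ x f, B (rt G V x f) = rt G V x (B f)) :
    ∀ f ∈ coi K ρ, A (B f) = B (A f) := by
  have := maschke (rt G V) ⊤ (coi K ρ) (LinearMap.ker (A ∘ₗ B - B ∘ₗ A)) (coi_inv K ρ) (by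
      intro x _ f hf
      simp only [LinearMap.mem_ker, LinearMap.sub_apply, LinearMap.comp_apply, hR, hRB] at hf ⊢
      rw [← map_sub, hf, map_zero]) (by
      intro P hP hi f hf
      obtain ⟨a, ha⟩ := lemI h hρ hn hP hi A hA hR
      obtain ⟨b, hb⟩ := lemI h hρ hn hP hi B hB hRB
      simp only [LinearMap.mem_ker, LinearMap.sub_apply, LinearMap.comp_apply]
      rw [ha f hf, hb f hf, map_smul, map_smul, ha f hf, hb f hf, smul_comm, sub_self])
  intro f hf
  have h1 := this hf
  simpa [sub_eq_zero] using h1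

end lemI

end JT

namespace JT

section threeA

variable {G : Type} [Group G] {V : Type} [AddCommGroup V] [Module ℂ V]

/-- twisted left translation -/
def lt (ρ : Representation ℂ G V) (b : G) : (G → V) →ₗ[ℂ] (G → V) where
  toFun f := fun y => ρ b⁻¹ (f (b * y))
  map_add' := by intro f g; funext y; simp
  map_smul' := by intro f g; funext y; simp

@[simp] lemma lt_apply (ρ : Representation ℂ G V) (b : G) (f : G → V) (y : G) :
    lt ρ b f y = ρ b⁻¹ (f (b * y)) := rfl

lemma lt_lt (ρ : Representation ℂ G V) (b c : G) (f : G → V) :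
    lt ρ b (lt ρ c f) = lt ρ (c * b) f := by
  funext y
  simp [mul_assoc, mul_inv_rev]

lemma lt_one (ρ : Representation ℂ G V) (f : G → V) : lt ρ 1 f = f := by
  funext y; simp

lemma lt_rt (ρ : Representation ℂ G V) (b x : G) (f : G → V) :
    lt ρ b (rt G V x f) = rt G V x (lt ρ b f) := by
  funext y; simp [mul_assoc]

lemma mem_coi_res {ρ : Representation ℂ G V} {K : Subgroup G} {f : G → V} :
    f ∈ coi K (resRep ρ K) ↔ ∀ k ∈ K, lt ρ k f = f := by
  constructor
  · intro h k hk
    funext y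
    have := h ⟨k, hk⟩ y
    simp only [resRep_apply] at this
    rw [lt_apply, this, rho_inv_mul]
  · intro h k y
    have := congrFun (h k k.2) y
    rw [lt_apply] at this
    rw [resRep_apply, ← this, rho_mul_inv]

lemma test_fun [Nontrivial V] (ρ : Representation ℂ G V) (T : Subgroup G) :
    ∃ f ∈ coi T (resRep ρ T), ∀ x, lt ρ x f = f → x ∈ T := by
  obtain ⟨v, hv⟩ := exists_ne (0 : V)
  obtain ⟨f, hf, h1, h2⟩ := coi_exists T (resRep ρ T) 1 v
  refine ⟨f, hf, fun x hx => ?_⟩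
  by_contra hxT
  have h3 := h2 x (by simpa using hxT)
  have h4 := congrFun hx 1
  have h5 := h1 1
  simp only [lt_apply, mul_one, h3, map_zero] at h4
  simp at h5
  exact hv (h5 ▸ h4.symm)

variable [Finite G] [FiniteDimensional ℂ V]

lemma threeA_conj {n : ℕ} (h : Bnd G n) {T : Subgroup G} (b : G)
    (hbad : ¬ Bnd (T ⊓ T.comap (MulAut.conj b).toMonoidHom : Subgroup G) (n - 1)) :
    ∀ t ∈ T, b * t * b⁻¹ ∈ T := by
  classical
  obtain ⟨V, _, _, _, ρ, hd, hI⟩ := bad h hbad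
  set K := T ⊓ T.comap (MulAut.conj b).toMonoidHom with hKdef
  have hK : ∀ k ∈ K, k ∈ T ∧ b * k * b⁻¹ ∈ T := fun k hk => ⟨hk.1, by simpa using hk.2⟩
  have : Fintype T := Fintype.ofFinite T
  have : Nontrivial V := hI.nontrivial
  let p : (G → V) →ₗ[ℂ] (G → V) := ∑ t : T, lt ρ (t : G)
  have hp : ∀ f, p f = ∑ t : T, lt ρ (t : G) f := fun f => by simp [p, LinearMap.sum_apply]
  have hpT : ∀ s ∈ T, ∀ f, lt ρ s (p f) = p f := fun s hs f => by
    rw [hp, map_sum]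
    refine Fintype.sum_equiv (Equiv.mulRight (⟨s, hs⟩ : T)) _ _ fun t => ?_
    rw [lt_lt]; rfl
  have hpfix : ∀ f, (∀ s ∈ T, lt ρ s f = f) → p f = (Fintype.card T : ℂ) • f := fun f hf => by
    have h1 : ∀ t : T, lt ρ (t : G) f = f := fun t => hf t t.2
    rw [hp]; simp only [h1]
    simp [Finset.sum_const, Nat.cast_smul_eq_nsmul]
  have hpR : ∀ x f, p (rt G V x f) = rt G V x (p f) := fun x f => by
    simp only [hp, map_sum, lt_rt]
  have hc : (Fintype.card T : ℂ) ≠ 0 := by exact_mod_cast Fintype.card_ne_zero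
  have hcomm := lemI_comm h (irr_res.mpr hI) hd.ge p (lt ρ b ∘ₗ p)
    (fun f _ => mem_coi_res.mpr fun k hk => hpT k (hK k hk).1 f) hpR
    (fun f _ => mem_coi_res.mpr fun k hk => by
      rw [LinearMap.comp_apply, lt_lt]
      have : b * k = (b * k * b⁻¹) * b := by group
      rw [this, ← lt_lt, hpT _ (hK k hk).2])
    (fun x f => by simp only [LinearMap.comp_apply, hpR, lt_rt])
  obtain ⟨f, hf, hx⟩ := test_fun ρ T
  have hfT := mem_coi_res.mp hf
  intro t ht
  apply hx
  have h1 := hcomm f (mem_coi_res.mpr fun k hk => hfT k (hK k hk).1)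
  simp only [LinearMap.comp_apply, hpfix f hfT, map_smul] at h1
  have h2 : p (lt ρ b f) = (Fintype.card T : ℂ) • lt ρ b f := by
    exact smul_right_injective _ hc h1
  have h3 : lt ρ t (lt ρ b f) = lt ρ b f := by
    have := hpT t ht (lt ρ b f)
    rw [h2, map_smul] at this
    exact smul_right_injective _ hc this
  rw [lt_lt] at h3
  rw [← lt_lt, h3, lt_lt, mul_inv_cancel, lt_one]

lemma threeA_normal {n : ℕ} (h : Bnd G n) {T : Subgroup G} (hT : ∀ b, ∀ t ∈ T, b * t * b⁻¹ ∈ T)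
    (hbad : ¬ Bnd T (n - 1)) : commutator G ≤ T := by
  obtain ⟨V, _, _, _, ρ, hd, hI⟩ := bad h hbad
  have : Nontrivial V := hI.nontrivial
  have hL : ∀ b, ∀ f ∈ coi T (resRep ρ T), lt ρ b f ∈ coi T (resRep ρ T) := fun b f hf => by
    rw [mem_coi_res] at hf ⊢
    intro k hk
    rw [lt_lt]
    have : b * k = (b * k * b⁻¹) * b := by group
    rw [this, ← lt_lt, hf _ (hT b k hk)]
  obtain ⟨f, hf, hx⟩ := test_fun ρ T
  rw [commutator_def, Subgroup.commutator_le]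
  intro c _ b _
  apply hx
  have h1 := lemI_comm h (irr_res.mpr hI) hd.ge (lt ρ b) (lt ρ c) (hL b) (lt_rt ρ b) (hL c)
    (lt_rt ρ c) f hf
  rw [lt_lt, lt_lt] at h1
  have h2 : c * b * c⁻¹ * b⁻¹ = (c * b) * (b * c)⁻¹ := by group
  rw [commutatorElement_def, h2, ← lt_lt, h1, lt_lt, mul_inv_cancel, lt_one]

lemma threeA {n : ℕ} (h : Bnd G n) (hno : ∀ K : Subgroup G, K.index ≤ n ^ 2 → ¬ Bnd K (n - 1))
    (T : Subgroup G) (hT : T.index ≤ n) : commutator G ≤ T := by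
  have hn := h.ne_zero
  refine threeA_normal h (fun b => threeA_conj h b (hno _ ?_)) (hno _ (by nlinarith))
  refine (Subgroup.index_inf_le).trans ?_
  rw [Subgroup.index_comap_of_surjective _ (MulAut.conj b).surjective, sq]
  exact Nat.mul_le_mul hT hT

/-- bad centralizer -/
lemma bad_centralizer {n : ℕ} (h : Bnd G n) (g : G)
    (hbad : ¬ Bnd (Subgroup.centralizer {g}) (n - 1)) :
    ∀ x, x * g * x⁻¹ * g = g * (x * g * x⁻¹) := by
  obtain ⟨V, _, _, _, ρ, hd, hI⟩ := bad h hbad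
  have : Nontrivial V := hI.nontrivial
  set H := Subgroup.centralizer {g} with hH
  have hg : g ∈ H := by simp [hH, Subgroup.mem_centralizer_singleton_iff]
  obtain ⟨w, hw⟩ := schur hI (ρ g) (fun k hk v => by
    rw [← rho_mul, ← rho_mul]
    rw [hH, Subgroup.mem_centralizer_singleton_iff] at hk
    rw [hk])
  have key := maschke (rt G V) ⊤ (coi H (resRep ρ H))
    (⨅ x : G, LinearMap.ker ((rt G V g - w • LinearMap.id) ∘ₗ rt G V x)) (coi_inv _ _) (by
      intro x _ f hf
      simp only [Submodule.mem_iInf, LinearMap.mem_ker, LinearMap.comp_apply] at hf ⊢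
      intro y
      rw [← rho_mul]; exact hf _) (by
      intro P hP hi f hf
      have hb := ev1_bij h (irr_res.mpr hI) hd.ge hP hi
      simp only [Submodule.mem_iInf, LinearMap.mem_ker, LinearMap.comp_apply]
      intro x
      have h1 : rt G V x f ∈ P := hi.2.1 x trivial f hf
      have h2 : rt G V g (rt G V x f) ∈ P := hi.2.1 g trivial _ h1
      have h3 : (rt G V g - w • (LinearMap.id : (G → V) →ₗ[ℂ] (G → V))) (rt G V x f) ∈ P := by
        simpa using P.sub_mem h2 (P.smul_mem w h1)
      have h4 : (⟨_, h3⟩ : P) = 0 := by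
        apply hb.1
        rw [map_zero, ev1_apply]
        have := coi_one (hP h1) ⟨g, hg⟩
        simp only [resRep_apply, hw] at this
        simp only [LinearMap.sub_apply, LinearMap.smul_apply, LinearMap.id_apply, Pi.sub_apply,
          Pi.smul_apply]
        rw [rt_apply, one_mul, this, sub_self]
      exact congrArg Subtype.val h4)
  intro x
  obtain ⟨v, hv⟩ := exists_ne (0 : V)
  obtain ⟨f, hf, h1, h2⟩ := coi_exists H (resRep ρ H) x v
  have h3 : f (x * g) = w • f x := by
    have := key hf
    simp only [Submodule.mem_iInf, LinearMap.mem_ker, LinearMap.comp_apply] at this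
    have := congrFun (this 1) x
    simpa [sub_eq_zero] using this
  have h4 : x * g * x⁻¹ ∈ H := by
    by_contra hc
    have h5 := h1 1
    simp at h5
    rw [h2 _ hc, h5, ← hw] at h3
    exact hv (rho_inj ρ g h3.symm)
  rw [hH, Subgroup.mem_centralizer_singleton_iff] at h4
  exact h4

end threeA

section stab
variable {G : Type} [Group G] {N : Subgroup G} [N.Normal]

/-- stabilizer of a linear character -/
def stab (ν : N →* ℂˣ) : Subgroup G where
  carrier := {x | ∀ a : N, ν (MulAut.conjNormal x a) = ν a}
  one_mem' := by intro a; simp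
  mul_mem' := by
    intro x y hx hy a
    rw [map_mul, MulAut.mul_apply, hx, hy]
  inv_mem' := by
    intro x hx a
    have := hx (MulAut.conjNormal x⁻¹ a)
    rw [← this, ← MulAut.mul_apply, ← map_mul]
    simp

lemma mem_stab {ν : N →* ℂˣ} {x : G} : x ∈ stab ν ↔ ∀ a : N, ν (MulAut.conjNormal x a) = ν a :=
  Iff.rfl

lemma le_stab (ν : N →* ℂˣ) : N ≤ stab ν := by
  intro x hx a
  have : MulAut.conjNormal x a = ⟨x, hx⟩ * a * ⟨x, hx⟩⁻¹ := by
    apply Subtype.ext; simp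
  rw [this, map_mul, map_mul, map_inv, mul_comm (ν ⟨x, hx⟩), mul_assoc, mul_inv_cancel, mul_one]

/-- one dimensional representation -/
def chr {K : Type} [Group K] (ν : K →* ℂˣ) : Representation ℂ K ℂ where
  toFun k := (ν k : ℂ) • LinearMap.id
  map_one' := by ext; simp
  map_mul' a b := by ext; simp [mul_comm]

@[simp] lemma chr_apply {K : Type} [Group K] (ν : K →* ℂˣ) (k : K) (z : ℂ) :
  chr ν k z = ν k * z := rfl

lemma chr_irr {K : Type} [Group K] (ν : K →* ℂˣ) : IrrOn (chr ν) ⊤ ⊤ :=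
  ⟨bot_ne_top.symm, inv_top _ _, fun W _ _ => eq_bot_or_eq_top W⟩

variable [Finite G]

lemma exists_U (ν : N →* ℂˣ) :
    ∃ (U : Type) (_ : AddCommGroup U) (_ : Module ℂ U) (_ : FiniteDimensional ℂ U)
      (ρ : Representation ℂ (stab ν) U), IrrOn ρ ⊤ ⊤ ∧
      ∀ (a : N) (u : U), ρ ⟨a, le_stab ν a.2⟩ u = (ν a : ℂ) • u := by
  let N' := N.subgroupOf (stab ν)
  let ν' : N' →* ℂˣ := ν.comp (Subgroup.subgroupOfEquivOfLe (le_stab ν)).toMonoidHom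
  obtain ⟨P, hP, hi⟩ := coi_exists_irr N' (chr ν') (chr_irr ν')
  have := hi.sub.nontrivial
  refine ⟨P, inferInstance, inferInstance, inferInstance,
    (subRep (rt _ ℂ) ⊤ P hi.2.1).comp (Subgroup.topEquiv.symm.toMonoidHom), ?_, ?_⟩
  · refine ⟨bot_ne_top.symm, inv_top _ _, fun W hW hinv => ?_⟩
    refine hi.sub.2.2 W hW ?_
    rintro ⟨k, hk⟩ _ w hw
    exact hinv k trivial w hw
  · intro a u
    apply Subtype.ext
    funext y
    change (u : stab ν → ℂ) (y * ⟨a, _⟩) = (ν a : ℂ) * (u : stab ν → ℂ) y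
    have h1 : y * ⟨(a : G), le_stab ν a.2⟩ =
      ((⟨⟨MulAut.conjNormal (y : G) a, le_stab ν (Subtype.prop _)⟩,
        Subgroup.mem_subgroupOf.mpr (MulAut.conjNormal (y : G) a).2⟩ : N') : stab ν) * y := by
      apply Subtype.ext
      simp
    rw [h1, hP u.2, chr_apply]
    congr 2
    exact y.2 a

lemma sd_le {n : ℕ} (h : Bnd G n) (ν : N →* ℂˣ) {U : Type} [AddCommGroup U] [Module ℂ U]
    [FiniteDimensional ℂ U] (ρ : Representation ℂ (stab ν) U) (hρ : IrrOn ρ ⊤ ⊤)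
    (hν : ∀ (a : N) (u : U), ρ ⟨a, le_stab ν a.2⟩ u = (ν a : ℂ) • u) :
    (stab ν).index * Module.finrank ℂ U ≤ n := by
  classical
  obtain ⟨P, hP, hi⟩ := coi_exists_irr (stab ν) ρ hρ
  have : Fintype (G ⧸ stab ν) := Fintype.ofFinite _
  have : Fintype N := Fintype.ofFinite _
  let Φ : P →ₗ[ℂ] (G ⧸ stab ν → U) :=
    LinearMap.pi fun q => (LinearMap.proj (R := ℂ) (φ := fun _ : G => U) (q.out)⁻¹) ∘ₗ P.subtype
  have hΦ : ∀ f q, Φ f q = (f : G → U) (q.out)⁻¹ := fun f q => rfl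
  let χ : G → N →* ℂˣ := fun x => ν.comp (MulAut.conjNormal x).toMonoidHom
  have hχ : ∀ x a, χ x a = ν (MulAut.conjNormal x a) := fun x a => rfl
  have hval : ∀ f ∈ P, ∀ (x : G) (a : N), f (x * a) = (χ x a : ℂ) • f x := fun f hf x a => by
    have h1 : x * a = ((⟨MulAut.conjNormal x a, le_stab ν (Subtype.prop _)⟩ : stab ν) : G) * x := by
      simp
    rw [h1, hP hf, hν, hχ]
  have hdist : ∀ x y : G, χ x⁻¹ = χ y⁻¹ → (x : G ⧸ stab ν) = y := fun x y hxy => by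
    rw [QuotientGroup.eq]
    intro a
    have := DFunLike.congr_fun hxy (MulAut.conjNormal y a)
    rw [hχ, hχ, ← MulAut.mul_apply, ← MulAut.mul_apply, ← map_mul, ← map_mul] at this
    simpa using this
  have hsurj : Function.Surjective Φ := by
    rw [← LinearMap.range_eq_top, eq_top_iff, ← LinearMap.iSup_range_single, iSup_le_iff]
    rintro q _ ⟨u, rfl⟩
    obtain ⟨f0, hf0, hu⟩ := ev_surj hρ hP hi.2.1 hi.1 u
    let f := rt G U q.out f0
    have hf : f ∈ P := hi.2.1 _ trivial _ hf0
    let F : G → U := (Fintype.card N : ℂ)⁻¹ • ∑ a : N, ((χ q.out⁻¹ a)⁻¹ : ℂˣ).val • rt G U a f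
    have hF : F ∈ P := P.smul_mem _ (P.sum_mem fun a _ => P.smul_mem _ (hi.2.1 _ trivial _ hf))
    refine ⟨⟨F, hF⟩, ?_⟩
    funext q'
    rw [hΦ]
    have h1 : F (q'.out)⁻¹ = ((Fintype.card N : ℂ)⁻¹ *
        ∑ a : N, (((χ q.out⁻¹)⁻¹ * χ q'.out⁻¹) a : ℂˣ).val) • f (q'.out)⁻¹ := by
      simp only [F, Pi.smul_apply, Finset.sum_apply, rt_apply, hval f hf, mul_smul,
        Finset.sum_smul, MonoidHom.mul_apply, MonoidHom.inv_apply, Units.val_mul]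
    have hc : (Fintype.card N : ℂ) ≠ 0 := by exact_mod_cast Fintype.card_ne_zero
    by_cases hq : q = q'
    · subst hq
      change F _ = _
      rw [h1]
      simp [hc, f, hu]
    · change F _ = _
      rw [h1]
      have h2 : (χ q.out⁻¹)⁻¹ * χ q'.out⁻¹ ≠ 1 := by
        intro h3
        apply hq
        have := hdist _ _ (inv_mul_eq_one.mp h3)
        simpa using this
      have h4 := sum_hom_units_eq_zero ((Units.coeHom ℂ).comp ((χ q.out⁻¹)⁻¹ * χ q'.out⁻¹)) (by
        intro h5
        apply h2
        ext a
        have := DFunLike.congr_fun h5 a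
        simpa using this)
      have h5 : ∑ a : N, (((χ q.out⁻¹)⁻¹ * χ q'.out⁻¹) a : ℂˣ).val = 0 := h4
      rw [h5]
      simp [Ne.symm hq]
  have h1 := LinearMap.finrank_le_finrank_of_surjective hsurj
  rw [Module.finrank_pi_fintype] at h1
  simp only [Finset.sum_const, Finset.card_univ, smul_eq_mul] at h1
  rw [Subgroup.index, Nat.card_eq_fintype_card]
  exact h1.trans (h.irr hi)

end stab

end JT

namespace JT

open scoped commutatorElement

section lemB

variable {G : Type} [Group G] [Finite G]

/-- twist by a character -/
def twist {K : Type} [Group K] {V : Type} [AddCommGroup V] [Module ℂ V] (μ : K →* ℂˣ)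
    (ρ : Representation ℂ K V) : Representation ℂ K V where
  toFun k := (μ k : ℂ) • ρ k
  map_one' := by ext; simp
  map_mul' a b := by
    ext v
    simp only [map_mul, Units.val_mul, mul_smul, LinearMap.smul_apply, Module.End.mul_apply, map_smul]
    exact smul_comm _ _ _

@[simp] lemma twist_apply {K : Type} [Group K] {V : Type} [AddCommGroup V] [Module ℂ V]
    (μ : K →* ℂˣ) (ρ : Representation ℂ K V) (k : K) (v : V) :
    twist μ ρ k v = (μ k : ℂ) • ρ k v := rfl

lemma twist_irr {K : Type} [Group K] {V : Type} [AddCommGroup V] [Module ℂ V]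
    (μ : K →* ℂˣ) (ρ : Representation ℂ K V) (h : IrrOn ρ ⊤ ⊤) : IrrOn (twist μ ρ) ⊤ ⊤ := by
  refine ⟨h.1, inv_top _ _, fun W hW hi => h.2.2 W hW fun k _ w hw => ?_⟩
  have := W.smul_mem ((μ k)⁻¹ : ℂˣ).val (hi k trivial w hw)
  simpa [smul_smul] using this

lemma lemB_op {n : ℕ} (h : Bnd G n) {T : Subgroup G} [T.Normal] (μ : T →* ℂˣ) (x : G)
    {V : Type} [AddCommGroup V] [Module ℂ V] [FiniteDimensional ℂ V] (ρ : Representation ℂ G V)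
    (hd : Module.finrank ℂ V = n) (hI : IrrOn ρ T ⊤) :
    ∃ A : V →ₗ[ℂ] V, (∀ v, A v = 0 → v = 0) ∧
      ∀ (t : T) v, A (ρ t v) = ((μ t)⁻¹ * μ (MulAut.conjNormal x t) : ℂˣ).val • ρ t (A v) := by
  have hI' := twist_irr μ _ (irr_res.mpr hI)
  obtain ⟨P, hP, hi⟩ := coi_exists_irr T _ hI'
  have hb := ev1_bij h hI' hd.ge hP hi
  let E := LinearEquiv.ofBijective _ hb
  have hE : ∀ f, E f = (f : G → V) 1 := fun f => rfl
  let A0 : P →ₗ[ℂ] V := ρ x⁻¹ ∘ₗ (LinearMap.proj (R := ℂ) (φ := fun _ : G => V) x) ∘ₗ P.subtype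
  have hA0 : ∀ f, A0 f = ρ x⁻¹ ((f : G → V) x) := fun f => rfl
  have hA : ∀ f, (A0 ∘ₗ E.symm.toLinearMap) (E f) = A0 f := fun f => by simp
  refine ⟨A0 ∘ₗ E.symm.toLinearMap, fun v hv => ?_, fun t v => ?_⟩
  · obtain ⟨f, rfl⟩ := E.surjective v
    rw [hA, hA0] at hv
    have h1 := rho_inj _ _ hv
    have h2 : (⟨rt G V x f, hi.2.1 x trivial _ f.2⟩ : P) = 0 := by
      apply hb.1
      simp [h1]
    have h3 : (f : G → V) = 0 := rho_inj _ x (congrArg Subtype.val h2)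
    rw [hE, h3]; rfl
  · obtain ⟨f, rfl⟩ := E.surjective v
    rw [hA]
    have h1 := hA ⟨rt G V t f, hi.2.1 t trivial _ f.2⟩
    have h2 : E ⟨rt G V t f, hi.2.1 t trivial _ f.2⟩ = (μ t : ℂ) • ρ t (E f) := by
      rw [hE, hE]
      simp only [rt_apply, one_mul]
      exact coi_one (hP f.2) t
    rw [h2, map_smul] at h1
    have h3 : (f : G → V) (x * t) = (μ (MulAut.conjNormal x t) : ℂ) •
        ρ (x * t * x⁻¹) ((f : G → V) x) := by
      have := hP f.2 (MulAut.conjNormal x t) x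
      simpa using this
    have h4 : A0 ⟨rt G V t f, hi.2.1 t trivial _ f.2⟩ = (μ (MulAut.conjNormal x t) : ℂ) •
        ρ t (A0 f) := by
      rw [hA0, hA0]
      simp only [rt_apply]
      rw [h3, map_smul, ← rho_mul, ← rho_mul]
      congr 3
      group
    rw [h4] at h1
    rw [Units.val_mul, mul_smul, ← h1, smul_smul]
    simp

lemma lemB {n : ℕ} (h : Bnd G n) (hno : ∀ K : Subgroup G, K.index ≤ n ^ 2 → ¬ Bnd K (n - 1))
    {T : Subgroup G} [T.Normal] (hT : T.index ≤ n) (μ : T →* ℂˣ) (x : G) (t0 : T)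
    (ht0 : μ (MulAut.conjNormal x t0) ≠ μ t0) : False := by
  have hn := h.ne_zero
  let κ : T →* ℂˣ := μ⁻¹ * μ.comp (MulAut.conjNormal x).toMonoidHom
  have hκ : ∀ t, κ t = (μ t)⁻¹ * μ (MulAut.conjNormal x t) := fun t => rfl
  have hcard : Nat.card κ.range ≤ n := by
    obtain ⟨V, _, _, _, ρ, hd, hI⟩ := bad h (hno T (by nlinarith))
    obtain ⟨A, hA1, hA2⟩ := lemB_op h μ x ρ hd hI
    have := hI.nontrivial
    obtain ⟨a, ha⟩ := Module.End.exists_eigenvalue A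
    obtain ⟨v, hv⟩ := ha.exists_hasEigenvector
    have hv0 : v ≠ 0 := hv.2
    have hv1 : A v = a • v := hv.apply_eq_smul
    have ha0 : a ≠ 0 := by
      rintro rfl
      exact hv0 (hA1 v (by simpa using hv1))
    have hex : ∀ z : κ.range, ∃ t, κ t = z := fun z => z.2
    choose t ht using hex
    have hli := Module.End.eigenvectors_linearIndependent' A (fun z : κ.range => (z : ℂˣ).val * a)
      (fun z z' hz => by
        have := mul_right_cancel₀ ha0 hz
        exact Subtype.ext (Units.ext this)) (fun z => ρ (t z) v) (fun z => by
        refine ⟨?_, fun h0 => hv0 (rho_inj _ _ h0)⟩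
        rw [Module.End.mem_eigenspace_iff, hA2, ← hκ, ht, hv1, map_smul, smul_smul])
    have : Finite κ.range := Set.finite_range κ
    have : Fintype κ.range := Fintype.ofFinite _
    rw [Nat.card_eq_fintype_card, ← hd]
    exact hli.fintype_card_le_finrank
  have hbad := hno (κ.ker.map T.subtype) (by
    rw [Subgroup.index_map_subtype, Subgroup.index_ker, sq]
    exact Nat.mul_le_mul hcard hT)
  obtain ⟨V, _, _, _, ρ, hd, hI⟩ := bad h hbad
  have := hI.nontrivial
  have hIT : IrrOn ρ T ⊤ := hI.up (Subgroup.map_subtype_le _) (inv_top _ _)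
  obtain ⟨A, hA1, hA2⟩ := lemB_op h μ x ρ hd hIT
  obtain ⟨c, hc⟩ := schur hI A (by
    rintro _ ⟨k, hk, rfl⟩ v
    have h1 := hA2 k v
    rw [← hκ, MonoidHom.mem_ker.mp hk] at h1
    simpa using h1)
  obtain ⟨v, hv⟩ := exists_ne (0 : V)
  have hc0 : c ≠ 0 := by
    rintro rfl
    exact hv (hA1 v (by simpa using hc v))
  have h1 := hA2 t0 v
  rw [← hκ, hc, hc, map_smul, smul_smul] at h1
  have h2 : ρ t0 v ≠ 0 := fun h0 => hv (rho_inj _ _ h0)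
  have h3 := smul_left_injective ℂ h2 h1
  have h4 : (κ t0 : ℂ) = 1 := by
    have h5 : c * 1 = c * (κ t0 : ℂ) := by rw [mul_one, mul_comm]; exact h3
    exact (mul_left_cancel₀ hc0 h5).symm
  have h5 : κ t0 = 1 := Units.ext h4
  rw [hκ, inv_mul_eq_one] at h5
  exact ht0 h5.symm

end lemB

section lemZ

variable {T : Type} [Group T] {U : Type} [AddCommGroup U] [Module ℂ U]

/-- elements acting by scalars -/
def scal (ρ : Representation ℂ T U) : Subgroup T where
  carrier := {t | ∃ c : ℂ, ∀ u, ρ t u = c • u}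
  one_mem' := ⟨1, by simp⟩
  mul_mem' := by
    rintro a b ⟨c, hc⟩ ⟨d, hd⟩
    exact ⟨d * c, fun u => by rw [rho_mul, hd, map_smul, hc, smul_smul]⟩
  inv_mem' := by
    rintro a ⟨c, hc⟩
    refine ⟨c⁻¹, fun u => ?_⟩
    by_cases h0 : c = 0
    · have : u = 0 := rho_inj ρ a (by rw [hc, h0, zero_smul])
      simp [this]
    · have h1 := hc (ρ a⁻¹ u)
      rw [rho_mul_inv] at h1
      have h2 : c⁻¹ • u = c⁻¹ • (c • ρ a⁻¹ u) := by rw [← h1]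
      rw [h2, smul_smul, inv_mul_cancel₀ h0, one_smul]

variable [Finite T] [FiniteDimensional ℂ U]

lemma lemZ {n : ℕ} (h : Bnd T n) (ρ : Representation ℂ T U) (hρ : IrrOn ρ ⊤ ⊤)
    (hd : 2 ≤ Module.finrank ℂ U) : Bnd (scal ρ) (n - 1) := by
  by_contra hbad
  obtain ⟨V, _, _, _, τ, hV, hI⟩ := bad h hbad
  have := hI.nontrivial
  have := hρ.nontrivial
  obtain ⟨P, -, hi⟩ := exists_irr' (Representation.linHom ρ τ) ⊤ ⊤ (inv_top _ _)
    (bot_ne_top.symm)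
  have hPn := h.irr hi
  let N : Submodule ℂ U := ⨅ A : P, LinearMap.ker (A : U →ₗ[ℂ] V)
  have hN : ∀ u, u ∈ N ↔ ∀ A ∈ P, A u = 0 := fun u => by
    simp [N, Submodule.mem_iInf]
  have hlin : ∀ g (A : U →ₗ[ℂ] V) u, Representation.linHom ρ τ g A u = τ g (A (ρ g⁻¹ u)) :=
    fun g A u => rfl
  have hN0 : N = ⊥ := by
    rcases hρ.2.2 N le_top (fun g _ u hu => by
      rw [hN] at hu ⊢
      intro A hA
      have := hu _ (hi.2.1 g⁻¹ trivial A hA)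
      rw [hlin, inv_inv] at this
      exact rho_inj _ _ this) with h0 | h0
    · exact h0
    · exfalso
      apply hi.1
      rw [eq_bot_iff]
      intro A hA
      rw [Submodule.mem_bot]
      ext u
      exact (hN u).mp (h0 ▸ Submodule.mem_top) A hA
  let ev : U → (P →ₗ[ℂ] V) := fun u => (LinearMap.applyₗ u) ∘ₗ P.subtype
  have hev : ∀ u (A : P), ev u A = (A : U →ₗ[ℂ] V) u := fun u A => rfl
  have hsc : ∀ z ∈ scal ρ, ∃ c : ℂ, ∀ u, ρ z⁻¹ u = c • u := fun z hz => (scal ρ).inv_mem hz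
  have hbij : ∀ u, u ≠ 0 → Function.Bijective (ev u) := fun u hu => by
    have hs : Function.Surjective (ev u) := by
      rw [← LinearMap.range_eq_top]
      rcases hI.2.2 (LinearMap.range (ev u)) le_top (by
        rintro z hz _ ⟨A, rfl⟩
        obtain ⟨c, hc⟩ := hsc z⁻¹ ((scal ρ).inv_mem hz)
        rw [inv_inv] at hc
        refine ⟨c • ⟨_, hi.2.1 z trivial A A.2⟩, ?_⟩
        rw [map_smul, hev, hev]
        simp only [hlin]
        rw [← map_smul, ← map_smul, ← map_smul, ← hc, rho_inv_mul]) with h0 | h0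
      · exfalso
        apply hu
        have : u ∈ N := by
          rw [hN]
          intro A hA
          have : ev u ⟨A, hA⟩ ∈ LinearMap.range (ev u) := ⟨_, rfl⟩
          rw [h0, Submodule.mem_bot] at this
          exact this
        rwa [hN0, Submodule.mem_bot] at this
      · exact h0
    have h1 := LinearMap.finrank_le_finrank_of_surjective hs
    exact ⟨(LinearMap.injective_iff_surjective_of_finrank_eq_finrank (by omega)).mpr hs, hs⟩
  obtain ⟨u1, hu1⟩ := exists_ne (0 : U)
  have hall : ∀ u2, ∃ c : ℂ, c • u1 = u2 := fun u2 => by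
    have hex : ∀ z, ∃ c : ℂ, z ∈ scal ρ → ∀ u, ρ z u = c • u := fun z => by
      by_cases hz : z ∈ scal ρ
      · obtain ⟨c, hc⟩ := hz
        exact ⟨c, fun _ => hc⟩
      · exact ⟨0, fun h => absurd h hz⟩
    choose c hc using hex
    have heq : ∀ u, ∀ z ∈ scal ρ, ∀ A : P,
        ev u (c z • ⟨_, hi.2.1 z trivial A A.2⟩) = τ z (ev u A) := fun u z hz A => by
      rw [map_smul, hev, hev]
      simp only [hlin]
      rw [← map_smul, ← map_smul, ← map_smul, ← hc z hz, rho_inv_mul]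
    obtain ⟨a, ha⟩ := schur2 hI (ev u1) (ev u2) (hbij u1 hu1)
      (fun z A => c z • ⟨_, hi.2.1 z trivial A A.2⟩) (heq u1) (heq u2)
    refine ⟨a, ?_⟩
    have : u2 - a • u1 ∈ N := by
      rw [hN]
      intro A hA
      have := ha ⟨A, hA⟩
      rw [hev, hev] at this
      simp [this]
    rw [hN0, Submodule.mem_bot, sub_eq_zero] at this
    exact this.symm
  have := finrank_le_one u1 hall
  omega

lemma scal_index (ρ : Representation ℂ T U) (hρ : IrrOn ρ ⊤ ⊤)
    (hcom : commutator T ≤ scal ρ) : (scal ρ).index ≤ Module.finrank ℂ U ^ 2 := by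
  classical
  have := hρ.nontrivial
  have htr : ∀ t, t ∉ scal ρ → LinearMap.trace ℂ U (ρ t) = 0 := by
    intro t ht
    have : ∃ y u, ρ t (ρ y u) ≠ ρ y (ρ t u) := by
      by_contra hc
      push Not at hc
      exact ht (schur hρ (ρ t) (fun y _ u => hc y u))
    obtain ⟨y, u, hyu⟩ := this
    obtain ⟨c, hc⟩ := hcom (Subgroup.commutator_mem_commutator (Subgroup.mem_top y) (Subgroup.mem_top t))
    rw [commutatorElement_def] at hc
    have h1 : ρ (y * t * y⁻¹) = c • ρ t := by
      ext u
      rw [LinearMap.smul_apply, ← hc, ← rho_mul]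
      simp
    have hc1 : c ≠ 1 := by
      rintro rfl
      apply hyu
      have := LinearMap.congr_fun h1 (ρ y u)
      rw [← rho_mul] at this
      simp only [inv_mul_cancel_right, rho_mul, one_smul] at this
      exact this.symm
    have h2 : LinearMap.trace ℂ U (ρ (y * t * y⁻¹)) = LinearMap.trace ℂ U (ρ t) := by
      rw [map_mul, LinearMap.trace_mul_comm, ← map_mul]
      simp
    rw [h1, map_smul, smul_eq_mul] at h2
    have h3 : (c - 1) * LinearMap.trace ℂ U (ρ t) = 0 := by rw [sub_mul, h2]; simp
    exact (mul_eq_zero.mp h3).resolve_left (sub_ne_zero.mpr hc1)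
  have : Fintype (T ⧸ scal ρ) := Fintype.ofFinite _
  have hli : LinearIndependent ℂ (fun q : T ⧸ scal ρ => ρ q.out) := by
    rw [Fintype.linearIndependent_iff]
    intro a ha p
    have h1 : LinearMap.trace ℂ U (ρ (p.out)⁻¹ * ∑ q, a q • ρ q.out) = 0 := by
      rw [ha]; simp
    rw [Finset.mul_sum, map_sum, Finset.sum_eq_single p] at h1
    · rw [mul_smul_comm, ← map_mul, inv_mul_cancel, map_one, map_smul, LinearMap.trace_one] at h1
      have h0 : (Module.finrank ℂ U : ℂ) ≠ 0 := by
        exact_mod_cast (Module.finrank_pos (R := ℂ) (M := U)).ne'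
      simpa [h0] using h1
    · intro q _ hq
      rw [mul_smul_comm, ← map_mul, map_smul, htr, smul_zero]
      intro hm
      apply hq
      have := QuotientGroup.eq.mpr hm
      simpa using this.symm
    · simp
  have := hli.fintype_card_le_finrank
  rw [Module.finrank_linearMap] at this
  rw [Subgroup.index, Nat.card_eq_fintype_card, sq]
  exact this

end lemZ

section case1
variable {G : Type} [Group G] [Finite G]

lemma case1 {n : ℕ} (h : Bnd G n) (hno : ∀ K : Subgroup G, K.index ≤ n ^ 2 → ¬ Bnd K (n - 1))
    (ν : commutator G →* ℂˣ) (hν : ν ≠ 1) : False := by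
  have : (commutator G).Normal := inferInstance
  obtain ⟨U, _, _, _, ρ, hρ, hρν⟩ := exists_U ν
  have hsd := sd_le h ν ρ hρ hρν
  have := hρ.nontrivial
  have hd := Module.finrank_pos (R := ℂ) (M := U)
  have hTn : (stab ν).Normal := by
    refine ⟨fun t ht x => ?_⟩
    have h1 : x * t * x⁻¹ = ⁅x, t⁆ * t := by rw [commutatorElement_def]; group
    rw [h1]
    exact (stab ν).mul_mem (le_stab ν (Subgroup.commutator_mem_commutator (Subgroup.mem_top _) (Subgroup.mem_top _))) ht
  by_cases hd1 : Module.finrank ℂ U = 1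
  · let μ : stab ν →* ℂˣ := ((LinearMap.det : (U →ₗ[ℂ] U) →* ℂ).comp ρ).toHomUnits
    have hμ : ∀ a : commutator G, μ ⟨a, le_stab ν a.2⟩ = ν a := fun a => by
      apply Units.ext
      have h1 : ρ ⟨a, le_stab ν a.2⟩ = (ν a : ℂ) • LinearMap.id := by
        ext u
        exact hρν a u
      change LinearMap.det (ρ ⟨a, le_stab ν a.2⟩) = _
      rw [h1, LinearMap.det_smul, hd1]
      simp
    by_cases hT : ∀ x, x ∈ stab ν
    · apply hν
      ext a
      let μ' : G →* ℂˣ := μ.comp ((MonoidHom.id G).codRestrict (stab ν) hT)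
      have h1 := Abelianization.commutator_subset_ker μ' a.2
      rw [MonoidHom.mem_ker] at h1
      have h2 : μ' a = μ ⟨a, le_stab ν a.2⟩ := rfl
      rw [← hμ, ← h2, h1]
      rfl
    · push Not at hT
      obtain ⟨x, hx⟩ := hT
      rw [mem_stab] at hx
      push Not at hx
      obtain ⟨a, ha⟩ := hx
      refine lemB h hno (by rwa [hd1, mul_one] at hsd) μ x ⟨a, le_stab ν a.2⟩ ?_
      have h1 : MulAut.conjNormal x (⟨a, le_stab ν a.2⟩ : stab ν) =
          ⟨MulAut.conjNormal x a, le_stab ν (MulAut.conjNormal x a).2⟩ := by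
        apply Subtype.ext; simp
      rw [h1, hμ, hμ]
      exact ha
  · have hZ := lemZ (h.subgroup (stab ν)) ρ hρ (by omega)
    have hi := scal_index ρ hρ (by
      refine Subgroup.commutator_le.mpr ?_
      intro a _ b _
      have h1 : ((⁅a, b⁆ : stab ν) : G) ∈ commutator G := by
        have : ((⁅a, b⁆ : stab ν) : G) = ⁅(a : G), (b : G)⁆ := by
          simp [commutatorElement_def]
        rw [this]
        exact Subgroup.commutator_mem_commutator (Subgroup.mem_top _) (Subgroup.mem_top _)
      exact ⟨_, hρν ⟨_, h1⟩⟩)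
    refine hno ((scal ρ).map (stab ν).subtype) ?_ (hZ.of_mulEquiv
      ((scal ρ).equivMapOfInjective _ (stab ν).subtype_injective))
    rw [Subgroup.index_map_subtype]
    have hs : 1 ≤ (stab ν).index := Nat.one_le_iff_ne_zero.mpr Subgroup.FiniteIndex.index_ne_zero
    calc (scal ρ).index * (stab ν).index
        ≤ Module.finrank ℂ U ^ 2 * (stab ν).index := Nat.mul_le_mul_right _ hi
      _ ≤ Module.finrank ℂ U ^ 2 * (stab ν).index ^ 2 := Nat.mul_le_mul_left _ (by nlinarith)
      _ = ((stab ν).index * Module.finrank ℂ U) ^ 2 := by ring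
      _ ≤ n ^ 2 := Nat.pow_le_pow_left hsd 2

lemma case1' {n : ℕ} (h : Bnd G n) (hno : ∀ K : Subgroup G, K.index ≤ n ^ 2 → ¬ Bnd K (n - 1)) :
    commutator (commutator G) = ⊤ := by
  by_contra hc
  have : Nontrivial (Abelianization (commutator G)) := by
    by_contra hn
    rw [not_nontrivial_iff_subsingleton] at hn
    apply hc
    rw [eq_top_iff]
    intro x _
    exact (QuotientGroup.eq_one_iff x).mp (hn.elim _ _)
  obtain ⟨a, ha⟩ := exists_ne (1 : Abelianization (commutator G))
  obtain ⟨φ, hφ⟩ := CommGroup.exists_apply_ne_one_of_hasEnoughRootsOfUnity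
    (Abelianization (commutator G)) ℂ ha
  refine case1 h hno (φ.comp Abelianization.of) fun h1 => hφ ?_
  obtain ⟨b, rfl⟩ := QuotientGroup.mk_surjective a
  exact DFunLike.congr_fun h1 b

end case1

end JT

namespace JT

open scoped commutatorElement

lemma count (G : Type) [Group G] [Finite G] {n : ℕ} (h : Bnd G n) :
    Nat.card G ≤ n ^ 2 * Nat.card (ConjClasses G) := by
  classical
  have : Fintype G := Fintype.ofFinite G
  have : Fintype (ConjClasses G) := Fintype.ofFinite _
  have : NeZero (Nat.card G : ℂ) := ⟨by exact_mod_cast Nat.card_pos.ne'⟩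
  obtain ⟨k, d, hd, ⟨φ⟩⟩ :=
    IsSemisimpleRing.exists_algEquiv_pi_matrix_of_isAlgClosed ℂ (MonoidAlgebra ℂ G)
  have hdn : ∀ i, d i ≤ n := by
    intro i
    let ψ : MonoidAlgebra ℂ G →ₐ[ℂ] ((Fin (d i) → ℂ) →ₗ[ℂ] (Fin (d i) → ℂ)) :=
      (Matrix.toLinAlgEquiv' (R := ℂ) (n := Fin (d i))).toAlgHom.comp
        ((Pi.evalAlgHom ℂ (fun i => Matrix (Fin (d i)) (Fin (d i)) ℂ) i).comp φ.toAlgHom)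
    have hψ : Function.Surjective ψ := by
      intro A
      obtain ⟨B, rfl⟩ := (Matrix.toLinAlgEquiv' (R := ℂ) (n := Fin (d i))).surjective A
      obtain ⟨x, hx⟩ := φ.surjective (Pi.single i B)
      refine ⟨x, ?_⟩
      change Matrix.toLinAlgEquiv' (φ x i) = _
      rw [hx, Pi.single_eq_same]
    let ρ : Representation ℂ G (Fin (d i) → ℂ) :=
      (ψ : MonoidAlgebra ℂ G →* _).comp (MonoidAlgebra.of ℂ G)
    have hρ : ∀ g, ρ g = ψ (MonoidAlgebra.of ℂ G g) := fun g => rfl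
    have : Nonempty (Fin (d i)) := ⟨⟨0, Nat.pos_of_ne_zero (hd i).out⟩⟩
    have hI : IrrOn ρ ⊤ ⊤ := by
      refine ⟨bot_ne_top.symm, inv_top _ _, fun W _ hW => ?_⟩
      have hall : ∀ x : MonoidAlgebra ℂ G, ∀ w ∈ W, ψ x w ∈ W := by
        intro x w hw
        induction x using MonoidAlgebra.induction_on with
        | of g => exact hW g trivial w hw
        | add a b ha hb => rw [map_add, LinearMap.add_apply]; exact W.add_mem ha hb
        | smul r a ha => rw [map_smul, LinearMap.smul_apply]; exact W.smul_mem r ha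
      by_cases h0 : W = ⊥
      · exact Or.inl h0
      · right
        obtain ⟨w, hw, hw0⟩ := Submodule.exists_mem_ne_zero_of_ne_bot h0
        rw [eq_top_iff]
        intro v _
        obtain ⟨f, hf⟩ := Module.Projective.exists_dual_eq_one ℂ hw0
        obtain ⟨x, hx⟩ := hψ (LinearMap.toSpanSingleton ℂ _ v ∘ₗ f)
        have := hall x w hw
        rw [hx] at this
        simpa [hf] using this
    have := h _ ρ hI
    simpa using this
  have hk : k ≤ Nat.card (ConjClasses G) := by
    let e : Fin k → MonoidAlgebra ℂ G := fun i => φ.symm (Pi.single i 1)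
    have he : LinearIndependent ℂ e := by
      have h1 : LinearIndependent ℂ (fun i : Fin k =>
          (Pi.single i 1 : ∀ i, Matrix (Fin (d i)) (Fin (d i)) ℂ)) := by
        rw [Fintype.linearIndependent_iff]
        intro a ha i
        have := congrFun (congrFun (congrFun ha i) ⟨0, Nat.pos_of_ne_zero (hd i).out⟩)
          ⟨0, Nat.pos_of_ne_zero (hd i).out⟩
        rw [Finset.sum_apply, Finset.sum_eq_single i] at this
        · simpa using this
        · intro j _ hj
          simp [hj.symm]
        · simp
      exact h1.map' φ.symm.toLinearMap (LinearMap.ker_eq_bot.mpr φ.symm.injective)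
    have hcent : ∀ i x, e i * x = x * e i := by
      intro i x
      apply φ.injective
      rw [map_mul, map_mul]
      simp only [e, AlgEquiv.apply_symm_apply]
      funext j
      by_cases hj : j = i
      · subst hj; simp
      · simp [hj]
    have hval : ∀ i (g x : G), (e i).coeff (x * g * x⁻¹) = (e i).coeff g := by
      intro i g x
      have := congrArg (fun y : MonoidAlgebra ℂ G => y.coeff (x * g)) (hcent i (MonoidAlgebra.of ℂ G x))
      simp only [MonoidAlgebra.of_apply, MonoidAlgebra.coeff_mul_single_apply,
        MonoidAlgebra.coeff_single_mul_apply] at this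
      simpa using this
    let F : Fin k → (ConjClasses G → ℂ) := fun i c => (e i).coeff c.out
    have hF : ∀ i g, (e i).coeff g = F i (ConjClasses.mk g) := by
      intro i g
      have h1 : ConjClasses.mk (Quotient.out (ConjClasses.mk g)) = ConjClasses.mk g :=
        Quotient.out_eq _
      rw [ConjClasses.mk_eq_mk_iff_isConj, isConj_iff] at h1
      obtain ⟨c, hc⟩ := h1
      have h2 := hval i (Quotient.out (ConjClasses.mk g)) c
      rw [hc] at h2
      exact h2
    have hFl : LinearIndependent ℂ F := by
      rw [Fintype.linearIndependent_iff] at he ⊢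
      intro a ha
      apply he
      ext g
      have := congrFun ha (ConjClasses.mk g)
      simpa [hF] using this
    have := hFl.fintype_card_le_finrank
    rw [Nat.card_eq_fintype_card]
    simpa using this
  have hdim := φ.toLinearEquiv.finrank_eq
  rw [Module.finrank_pi_fintype] at hdim
  simp only [Module.finrank_matrix, Fintype.card_fin, Module.finrank_self, mul_one] at hdim
  have h1 : Module.finrank ℂ (MonoidAlgebra ℂ G) = Nat.card G := by
    rw [Nat.card_eq_fintype_card]
    rw [(MonoidAlgebra.coeffLinearEquiv ℂ).finrank_eq]
    exact Module.finrank_finsupp_self ℂ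
  rw [h1] at hdim
  rw [hdim]
  calc ∑ i, d i * d i ≤ ∑ i : Fin k, n ^ 2 :=
        Finset.sum_le_sum fun i _ => by rw [sq]; exact Nat.mul_le_mul (hdn i) (hdn i)
    _ = n ^ 2 * k := by simp [mul_comm]
    _ ≤ _ := Nat.mul_le_mul_left _ hk

end JT

namespace JT

open scoped commutatorElement

section case2
variable {G : Type} [Group G] [Finite G]

lemma small_class {n : ℕ} (h : Bnd G n)
    (hno : ∀ K : Subgroup G, K.index ≤ n ^ 2 → ¬ Bnd K (n - 1)) (g : G)
    (hg : (Subgroup.centralizer {g}).index ≤ n ^ 2) :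
    g ∈ Subgroup.centralizer (commutator G : Set G) := by
  have hc := bad_centralizer h g (hno _ hg)
  let A := Subgroup.normalClosure {g}
  have hgA : g ∈ A := Subgroup.subset_normalClosure rfl
  have hA : ∀ a ∈ A, ∀ b ∈ A, a * b = b * a := by
    have hcc : ∀ x y : G, (x * g * x⁻¹) * (y * g * y⁻¹) = (y * g * y⁻¹) * (x * g * x⁻¹) := by
      intro x y
      have h1 := congrArg (fun z => y * z * y⁻¹) (hc (y⁻¹ * x))
      calc _ = y * (y⁻¹ * x * g * (y⁻¹ * x)⁻¹ * g) * y⁻¹ := by group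
        _ = _ := h1
        _ = _ := by group
    have h1 : ∀ x, A ≤ Subgroup.centralizer {x * g * x⁻¹} := by
      intro x
      refine (Subgroup.closure_le _).mpr ?_
      intro z hz
      rw [Group.mem_conjugatesOfSet_iff] at hz
      obtain ⟨_, rfl, hz⟩ := hz
      obtain ⟨y, rfl⟩ := isConj_iff.mp hz
      rw [SetLike.mem_coe, Subgroup.mem_centralizer_singleton_iff]
      exact hcc y x
    intro a ha
    have h2 : A ≤ Subgroup.centralizer {a} := by
      refine (Subgroup.closure_le _).mpr ?_
      intro z hz
      rw [Group.mem_conjugatesOfSet_iff] at hz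
      obtain ⟨_, rfl, hz⟩ := hz
      obtain ⟨y, rfl⟩ := isConj_iff.mp hz
      rw [SetLike.mem_coe, Subgroup.mem_centralizer_singleton_iff]
      have := h1 y ha
      rw [Subgroup.mem_centralizer_singleton_iff] at this
      exact this.symm
    intro b hb
    have := h2 hb
    rw [Subgroup.mem_centralizer_singleton_iff] at this
    exact this.symm
  have : A.Normal := Subgroup.normalClosure_normal
  have hst : ∀ ν : A →* ℂˣ, commutator G ≤ stab ν := by
    intro ν
    apply threeA h hno
    obtain ⟨U, _, _, _, ρ, hρ, hρν⟩ := exists_U ν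
    have hsd := sd_le h ν ρ hρ hρν
    have := hρ.nontrivial
    have hd := Module.finrank_pos (R := ℂ) (M := U)
    nlinarith
  rw [Subgroup.mem_centralizer_iff]
  intro x hx
  let _ : CommGroup A := { (inferInstance : Group A) with
    mul_comm := fun a b => Subtype.ext (hA a a.2 b b.2) }
  by_contra hne
  let ga : A := ⟨g, hgA⟩
  have h1 : MulAut.conjNormal x ga * ga⁻¹ ≠ 1 := by
    intro h2
    rw [mul_inv_eq_one] at h2
    have h3 := congrArg Subtype.val h2
    simp only [MulAut.conjNormal_apply, ga] at h3
    exact hne (mul_inv_eq_iff_eq_mul.mp h3)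
  obtain ⟨φ, hφ⟩ := CommGroup.exists_apply_ne_one_of_hasEnoughRootsOfUnity A ℂ h1
  apply hφ
  rw [map_mul, map_inv, mul_inv_eq_one]
  exact hst φ hx ga

lemma index_C {n : ℕ} (h : Bnd G n)
    (hno : ∀ K : Subgroup G, K.index ≤ n ^ 2 → ¬ Bnd K (n - 1)) :
    (Subgroup.centralizer (commutator G : Set G)).index ≤ n ^ 4 := by
  classical
  have : Fintype G := Fintype.ofFinite G
  set C := Subgroup.centralizer (commutator G : Set G) with hC
  have h1 := count G h
  have h2 := card_comm_eq_card_conjClasses_mul_card G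
  have h3 : Nat.card { p : G × G // Commute p.1 p.2 } =
      ∑ g : G, Nat.card (Subgroup.centralizer {g}) := by
    rw [← Nat.card_sigma]
    refine Nat.card_congr ⟨fun p => ⟨p.1.1, p.1.2, ?_⟩, fun p => ⟨(p.1, p.2.1), ?_⟩, ?_, ?_⟩
    · rw [Subgroup.mem_centralizer_singleton_iff]; exact p.2.symm
    · have := p.2.2
      rw [Subgroup.mem_centralizer_singleton_iff] at this
      exact this.symm
    · intro p; rfl
    · intro p; rfl
  have hbig : ∀ g, g ∉ C → (n ^ 2 + 1) * Nat.card (Subgroup.centralizer {g}) ≤ Nat.card G := by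
    intro g hg
    have h4 : n ^ 2 + 1 ≤ (Subgroup.centralizer {g}).index := by
      by_contra hlt
      exact hg (small_class h hno g (by omega))
    rw [← (Subgroup.centralizer {g}).index_mul_card]
    exact Nat.mul_le_mul_right _ h4
  have hsum : (n ^ 2 + 1) * ∑ g : G, Nat.card (Subgroup.centralizer {g}) ≤
      n ^ 2 * (Nat.card C * Nat.card G) + Nat.card G * Nat.card G := by
    rw [Finset.mul_sum]
    have h5 : ∀ g : G, (n ^ 2 + 1) * Nat.card (Subgroup.centralizer {g}) ≤
        (if g ∈ C then n ^ 2 * Nat.card G else 0) + Nat.card G := by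
      intro g
      split_ifs with hg
      · have : Nat.card (Subgroup.centralizer {g}) ≤ Nat.card G := Subgroup.card_le_card_group _
        nlinarith [Nat.mul_le_mul_left (n ^ 2) this]
      · rw [zero_add]; exact hbig g hg
    refine (Finset.sum_le_sum fun g _ => h5 g).trans ?_
    rw [Finset.sum_add_distrib, ← Finset.sum_filter, Finset.sum_const, Finset.sum_const]
    simp only [smul_eq_mul, Finset.card_univ]
    have h6 : (Finset.univ.filter (fun g => g ∈ C)).card = Nat.card C := by
      rw [Nat.card_eq_fintype_card, Fintype.card_subtype]
    rw [h6, ← Nat.card_eq_fintype_card (α := G)]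
    apply le_of_eq; ring
  rw [← h3, h2] at hsum
  have hG : 0 < Nat.card G := Nat.card_pos
  have h7 : (n ^ 2 + 1) * Nat.card (ConjClasses G) ≤ n ^ 2 * Nat.card C + Nat.card G := by
    apply Nat.le_of_mul_le_mul_right _ hG
    calc _ = (n ^ 2 + 1) * (Nat.card (ConjClasses G) * Nat.card G) := by ring
      _ ≤ _ := hsum
      _ = _ := by ring
  have h8 : Nat.card G ≤ n ^ 4 * Nat.card C := by
    have h9 := Nat.mul_le_mul_left (n ^ 2) h7
    have h10 := Nat.mul_le_mul_left (n ^ 2 + 1) h1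
    nlinarith
  have hCp : 0 < Nat.card C := Nat.card_pos
  rw [← C.index_mul_card] at h8
  exact Nat.le_of_mul_le_mul_right h8 hCp

/-- perfect group acting by scalars on a subspace acts trivially -/
lemma perfect_trivial {D : Subgroup G} (hD : commutator D = ⊤) {V : Type} [AddCommGroup V]
    [Module ℂ V] (ρ : Representation ℂ G V) (Q : Submodule ℂ V)
    (hs : ∀ d ∈ D, ∃ c : ℂ, ∀ q ∈ Q, ρ d q = c • q) : ∀ d ∈ D, ∀ q ∈ Q, ρ d q = q := by
  let K : Subgroup D :=
    { carrier := {d | ∀ q ∈ Q, ρ (d : G) q = q}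
      one_mem' := by intro q _; simp
      mul_mem' := by
        intro a b ha hb q hq
        rw [Subgroup.coe_mul, rho_mul, hb q hq, ha q hq]
      inv_mem' := by
        intro a ha q hq
        have := ha q hq
        rw [Subgroup.coe_inv]
        nth_rewrite 1 [← this]
        rw [rho_inv_mul] }
  have hK : commutator D ≤ K := by
    rw [commutator_def, Subgroup.commutator_le]
    intro a _ b _ q hq
    obtain ⟨c, hc⟩ := hs a a.2
    obtain ⟨e, he⟩ := hs b b.2
    have h1 : ∀ q ∈ Q, ρ ((a : G) * b) q = ρ ((b : G) * a) q := fun q hq => by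
      rw [rho_mul, rho_mul, hc q hq, he q hq, map_smul, map_smul, hc q hq, he q hq, smul_comm]
    have h2 : ∀ d ∈ D, ∀ q ∈ Q, ρ d q ∈ Q := fun d hd q hq => by
      obtain ⟨c, hc⟩ := hs d hd
      rw [hc q hq]; exact Q.smul_mem _ hq
    have h3 : ((⁅a, b⁆ : D) : G) = ((a : G) * b) * ((b : G) * a)⁻¹ := by
      rw [commutatorElement_def]; simp [mul_assoc]
    rw [h3, rho_mul, h1 _ (h2 _ (D.inv_mem (D.mul_mem b.2 a.2)) q hq), rho_mul_inv]
  intro d hd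
  have : (⟨d, hd⟩ : D) ∈ K := hK (hD ▸ Subgroup.mem_top _)
  exact this

lemma perfect_not_le (hD : commutator (commutator G) = ⊤) (hne : commutator G ≠ ⊥) :
    ¬ commutator G ≤ Subgroup.centralizer (commutator G : Set G) := by
  intro hle
  apply hne
  have h1 : commutator (commutator G) = ⊥ := by
    rw [eq_bot_iff]
    refine Subgroup.commutator_le.mpr ?_
    intro a _ b _
    rw [Subgroup.mem_bot, commutatorElement_eq_one_iff_mul_comm]
    apply Subtype.ext
    have := hle b.2
    rw [Subgroup.mem_centralizer_iff] at this
    exact this a a.2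
  rw [hD] at h1
  rw [eq_bot_iff]
  intro x hx
  have h2 : (⟨x, hx⟩ : commutator G) ∈ (⊥ : Subgroup (commutator G)) := h1 ▸ Subgroup.mem_top _
  rw [Subgroup.mem_bot] at h2
  exact congrArg Subtype.val h2

lemma bnd_C {n : ℕ} (h : Bnd G n) (hD : commutator (commutator G) = ⊤) (hne : commutator G ≠ ⊥) :
    Bnd (Subgroup.centralizer (commutator G : Set G)) (n / 2) := by
  set C := Subgroup.centralizer (commutator G : Set G) with hC
  have hcomm : ∀ c ∈ C, ∀ d ∈ commutator G, d * c = c * d := fun c hc d hd => by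
    rw [hC, Subgroup.mem_centralizer_iff] at hc
    exact hc d hd
  intro W _ _ _ σ hσ
  have := hσ.nontrivial
  have hex : ∃ P ≤ coi C σ, IrrOn (rt G W) ⊤ P ∧ ∃ d ∈ commutator G, ∃ f ∈ P, rt G W d f ≠ f := by
    by_contra hc
    push Not at hc
    have key := maschke (rt G W) ⊤ (coi C σ)
      (⨅ x : commutator G, LinearMap.ker (rt G W (x : G) - LinearMap.id)) (coi_inv _ _) (by
        intro y _ f hf
        simp only [Submodule.mem_iInf, LinearMap.mem_ker, LinearMap.sub_apply, LinearMap.id_apply,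
          sub_eq_zero] at hf ⊢
        intro x
        have h1 := hf ⟨y⁻¹ * x * y, by
          have := (inferInstance : (commutator G).Normal).conj_mem x x.2 y⁻¹
          simpa using this⟩
        simp only at h1
        rw [← rho_mul]
        nth_rewrite 2 [← h1]
        rw [← rho_mul]
        congr 2
        group) (by
        intro P hP hi f hf
        simp only [Submodule.mem_iInf, LinearMap.mem_ker, LinearMap.sub_apply, LinearMap.id_apply,
          sub_eq_zero]
        intro x
        exact hc P hP hi x x.2 f hf)
    apply perfect_not_le hD hne
    intro d hd
    obtain ⟨w, hw⟩ := exists_ne (0 : W)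
    obtain ⟨f, hf, h1, h2⟩ := coi_exists C σ 1 w
    by_contra hdC
    have h3 := h2 d (by simpa using hdC)
    have h4 := key hf
    simp only [Submodule.mem_iInf, LinearMap.mem_ker, LinearMap.sub_apply, LinearMap.id_apply,
          sub_eq_zero] at h4
    have h5 := congrFun (h4 ⟨d, hd⟩) 1
    have h6 := h1 1
    simp at h6 h5
    exact hw (by rw [← h6, ← h5, h3])
  obtain ⟨P, hP, hi, d0, hd0, f0, hf0, hne0⟩ := hex
  have hQex : ∃ Q ≤ P, IrrOn (rt G W) C Q ∧ ∃ f ∈ Q, f 1 ≠ 0 := by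
    by_contra hc
    push Not at hc
    obtain ⟨w, hw⟩ := exists_ne (0 : W)
    obtain ⟨f, hf, hfw⟩ := ev_surj hσ hP hi.2.1 hi.1 w
    have key := maschke (rt G W) C P
      (coi C σ ⊓ LinearMap.ker (LinearMap.proj (R := ℂ) (φ := fun _ : G => W) 1))
      (hi.2.1.mono le_top) (by
        rintro c hc f ⟨hf, hf1⟩
        refine ⟨coi_inv _ _ _ trivial _ hf, ?_⟩
        rw [SetLike.mem_coe, LinearMap.mem_ker, LinearMap.proj_apply] at hf1 ⊢
        rw [rt_apply, one_mul]
        have := coi_one hf ⟨c, hc⟩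
        simp only at this
        rw [this, hf1, map_zero]) (by
        intro Q hQ hQi f hf
        exact ⟨hP (hQ hf), hc Q hQ hQi f hf⟩)
    have := (key hf).2
    rw [SetLike.mem_coe, LinearMap.mem_ker, LinearMap.proj_apply, hfw] at this
    exact hw this
  obtain ⟨Q, hQ, hQi, f1, hf1, hf1n⟩ := hQex
  have hdimQ : Module.finrank ℂ W ≤ Module.finrank ℂ Q := by
    refine LinearMap.finrank_le_finrank_of_surjective (f := ev1 Q) ?_
    rw [← LinearMap.range_eq_top]
    rcases hσ.2.2 (LinearMap.range (ev1 Q)) le_top (by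
      rintro c - _ ⟨f, rfl⟩
      refine ⟨⟨rt G W c f, hQi.2.1 c c.2 f f.2⟩, ?_⟩
      rw [ev1_apply, ev1_apply]
      simp only [rt_apply, one_mul]
      exact coi_one (hP (hQ f.2)) c) with h0 | h0
    · exfalso
      have : ev1 Q ⟨f1, hf1⟩ ∈ LinearMap.range (ev1 Q) := ⟨_, rfl⟩
      rw [h0, Submodule.mem_bot] at this
      exact hf1n this
    · exact h0
  -- some d moves Q
  have hmove : ∃ d ∈ commutator G, ¬ Q.map (rt G W d) ≤ Q := by
    by_contra hc
    push Not at hc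
    have htriv := perfect_trivial hD (rt G W) Q (by
      intro d hd
      have hdQ : ∀ q ∈ Q, rt G W d q ∈ Q := fun q hq => hc d hd ⟨q, hq, rfl⟩
      obtain ⟨c, hc⟩ := schur hQi.sub ((rt G W d).restrict hdQ) (by
        rintro ⟨k, hk⟩ _ v
        apply Subtype.ext
        simp only [LinearMap.coe_restrict_apply, subRep_apply]
        rw [← rho_mul, ← rho_mul, hcomm k hk d hd])
      exact ⟨c, fun q hq => congrArg Subtype.val (hc ⟨q, hq⟩)⟩)
    -- fixed points of D in P
    let F : Submodule ℂ (G → W) :=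
      P ⊓ ⨅ x : commutator G, LinearMap.ker (rt G W (x : G) - LinearMap.id)
    have hF : ∀ f, f ∈ F ↔ f ∈ P ∧ ∀ d ∈ commutator G, rt G W d f = f := by
      intro f
      simp only [F, Submodule.mem_inf, Submodule.mem_iInf, LinearMap.mem_ker, LinearMap.sub_apply,
        LinearMap.id_apply, sub_eq_zero, Subtype.forall]
    rcases hi.2.2 F inf_le_left (by
      intro y _ f hf
      rw [hF] at hf ⊢
      refine ⟨hi.2.1 y trivial f hf.1, fun d hd => ?_⟩
      have h1 := hf.2 (y⁻¹ * d * y) (by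
          have := (inferInstance : (commutator G).Normal).conj_mem d hd y⁻¹
          simpa using this)
      rw [← rho_mul]
      nth_rewrite 2 [← h1]
      rw [← rho_mul]
      congr 2
      group) with h0 | h0
    · have : f1 ∈ F := by
        rw [hF]
        exact ⟨hQ hf1, fun d hd => htriv d hd f1 hf1⟩
      rw [h0, Submodule.mem_bot] at this
      rw [this] at hf1n
      exact hf1n rfl
    · rw [← h0, hF] at hf0
      exact hne0 (hf0.2 d0 hd0)
  obtain ⟨d, hd, hdQ⟩ := hmove
  have hinj : Function.Injective (rt G W d) := by
    rw [← LinearMap.ker_eq_bot, LinearMap.ker_eq_bot']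
    intro f hf
    exact rho_inj _ _ hf
  have hdimd : Module.finrank ℂ (Q.map (rt G W d)) = Module.finrank ℂ Q :=
    (Submodule.equivMapOfInjective (rt G W d) hinj Q).finrank_eq.symm
  have hinvd : Inv (rt G W) C (Q.map (rt G W d)) := by
    rintro c hc _ ⟨f, hf, rfl⟩
    refine ⟨rt G W c f, hQi.2.1 c hc f hf, ?_⟩
    rw [← rho_mul, ← rho_mul, hcomm c hc d hd]
  have hdisj : Q ⊓ Q.map (rt G W d) = ⊥ := by
    rcases hQi.2.2 (Q ⊓ Q.map (rt G W d)) inf_le_left (hQi.2.1.inf hinvd) with h0 | h0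
    · exact h0
    · exfalso
      apply hdQ
      have h1 : Q ≤ Q.map (rt G W d) := inf_eq_left.mp h0
      exact (Submodule.eq_of_le_of_finrank_eq h1 hdimd.symm).ge
  have hsup := Submodule.finrank_sup_add_finrank_inf_eq Q (Q.map (rt G W d))
  rw [hdisj, finrank_bot, hdimd] at hsup
  have hle : Q ⊔ Q.map (rt G W d) ≤ P := by
    refine sup_le hQ ?_
    rintro _ ⟨f, hf, rfl⟩
    exact hi.2.1 d trivial f (hQ hf)
  have h1 := Submodule.finrank_mono hle
  have h2 := h.irr hi
  omega

end case2
end JT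

namespace JT

open scoped commutatorElement

section two
variable {D : Type} [Group D]

lemma perfect_trivial' (hD : commutator D = ⊤) {V : Type} [AddCommGroup V]
    [Module ℂ V] (ρ : Representation ℂ D V) (Q : Submodule ℂ V)
    (hs : ∀ d : D, ∃ c : ℂ, ∀ q ∈ Q, ρ d q = c • q) : ∀ d : D, ∀ q ∈ Q, ρ d q = q := by
  let K : Subgroup D :=
    { carrier := {d | ∀ q ∈ Q, ρ d q = q}
      one_mem' := by intro q _; simp
      mul_mem' := by
        intro a b ha hb q hq
        rw [rho_mul, hb q hq, ha q hq]
      inv_mem' := by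
        intro a ha q hq
        have := ha q hq
        nth_rewrite 1 [← this]
        rw [rho_inv_mul] }
  have hK : commutator D ≤ K := by
    refine Subgroup.commutator_le.mpr ?_
    intro a _ b _ q hq
    obtain ⟨c, hc⟩ := hs a
    obtain ⟨e, he⟩ := hs b
    have h1 : ∀ q ∈ Q, ρ (a * b) q = ρ (b * a) q := fun q hq => by
      rw [rho_mul, rho_mul, hc q hq, he q hq, map_smul, map_smul, hc q hq, he q hq, smul_comm]
    have h2 : ∀ d : D, ∀ q ∈ Q, ρ d q ∈ Q := fun d q hq => by
      obtain ⟨c, hc⟩ := hs d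
      rw [hc q hq]; exact Q.smul_mem _ hq
    have h3 : ⁅a, b⁆ = (a * b) * (b * a)⁻¹ := by
      rw [commutatorElement_def]; simp [mul_assoc]
    rw [h3, rho_mul, h1 _ (h2 _ q hq), rho_mul_inv]
  intro d
  have : d ∈ K := hK (hD ▸ Subgroup.mem_top _)
  exact this

lemma perfect_one (hD : commutator D = ⊤) {V : Type} [AddCommGroup V]
    [Module ℂ V] (ρ : Representation ℂ D V) (Q : Submodule ℂ V) (hQ : Inv ρ ⊤ Q)
    (h1 : Module.finrank ℂ Q = 1) : ∀ d : D, ∀ q ∈ Q, ρ d q = q := by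
  apply perfect_trivial' hD
  intro d
  obtain ⟨v, -, hv⟩ := finrank_eq_one_iff'.mp h1
  obtain ⟨c, hc⟩ := hv ⟨ρ d v, hQ d trivial v v.2⟩
  have hc' : c • (v : V) = ρ d v := congrArg Subtype.val hc
  refine ⟨c, fun q hq => ?_⟩
  obtain ⟨e, he⟩ := hv ⟨q, hq⟩
  have he' : e • (v : V) = q := congrArg Subtype.val he
  rw [← he', map_smul, ← hc', smul_comm]

lemma tr_dim {U : Type} [AddCommGroup U] [Module ℂ U] [FiniteDimensional ℂ U]
    (hU : Module.finrank ℂ U = 2) : 3 ≤ Module.finrank ℂ (LinearMap.ker (LinearMap.trace ℂ U)) := by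
  have h1 := LinearMap.finrank_range_add_finrank_ker (K := ℂ) (V := U →ₗ[ℂ] U) (V₂ := ℂ)
    (LinearMap.trace ℂ U)
  have h2 := Submodule.finrank_le (LinearMap.range (LinearMap.trace ℂ U))
  rw [Module.finrank_self] at h2
  rw [Module.finrank_linearMap, hU] at h1
  omega

lemma tr_dim' {U : Type} [AddCommGroup U] [Module ℂ U] [FiniteDimensional ℂ U]
    (hU : Module.finrank ℂ U = 2) : Module.finrank ℂ (LinearMap.ker (LinearMap.trace ℂ U)) < 4 := by
  have h0 : Module.finrank ℂ (U →ₗ[ℂ] U) = 4 := by rw [Module.finrank_linearMap, hU]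
  rw [← h0]
  refine Submodule.finrank_lt (K := ℂ) (V := U →ₗ[ℂ] U) ?_
  intro h1
  have h2 : (LinearMap.id : U →ₗ[ℂ] U) ∈ LinearMap.ker (LinearMap.trace ℂ U) :=
    h1 ▸ Submodule.mem_top
  rw [LinearMap.mem_ker, LinearMap.trace_id, hU] at h2
  norm_num at h2

lemma no_two [Finite D] (hD : commutator D = ⊤) (hb : Bnd D 2) {U : Type} [AddCommGroup U]
    [Module ℂ U] [FiniteDimensional ℂ U] (σ : Representation ℂ D U) (hσ : IrrOn σ ⊤ ⊤)
    (hU : Module.finrank ℂ U = 2) : False := by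
  let τ : Representation ℂ D (U →ₗ[ℂ] U) := Representation.linHom σ σ
  have hτ : ∀ d (A : U →ₗ[ℂ] U), τ d A = σ d ∘ₗ A ∘ₗ σ d⁻¹ := fun d A => by
    simp [τ, Representation.linHom_apply]
  let X : Submodule ℂ (U →ₗ[ℂ] U) := LinearMap.ker (LinearMap.trace ℂ U)
  have hX : Inv (V := U →ₗ[ℂ] U) τ ⊤ X := by
    intro d _ A hA
    rw [LinearMap.mem_ker] at hA ⊢
    rw [hτ, LinearMap.trace_comp_comm', LinearMap.comp_assoc]
    have : σ d⁻¹ ∘ₗ σ d = LinearMap.id := by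
      ext1 v
      exact rho_inv_mul σ d v
    rw [this, LinearMap.comp_id, hA]
  have hE : Module.finrank ℂ (U →ₗ[ℂ] U) = 4 := by
    rw [Module.finrank_linearMap, hU]
  have hX3 : 3 ≤ Module.finrank ℂ X := tr_dim hU
  have hX4 : Module.finrank ℂ X < 4 := tr_dim' hU
  have key : ∀ Y ≤ X, IrrOn (V := U →ₗ[ℂ] U) τ ⊤ Y → Module.finrank ℂ Y = 2 := by
    intro Y hY hYi
    have h2 := hb.irr hYi
    have h0 : Module.finrank ℂ Y ≠ 0 := fun h0 => hYi.1 (Submodule.finrank_eq_zero.mp h0)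
    have h1 : Module.finrank ℂ Y ≠ 1 := by
      intro h1
      have ht := perfect_one hD τ Y hYi.2.1 h1
      apply hYi.1
      rw [eq_bot_iff]
      intro A hA
      obtain ⟨c, hc⟩ := schur hσ A (by
        intro d _ v
        have h3 := LinearMap.congr_fun (ht d A hA) (σ d v)
        rw [hτ, LinearMap.comp_apply, LinearMap.comp_apply, rho_inv_mul] at h3
        exact h3.symm)
      have hAc : A = c • LinearMap.id := LinearMap.ext hc
      have h4 := hY hA
      rw [LinearMap.mem_ker, hAc, map_smul, LinearMap.trace_id, hU] at h4
      have h5 : c = 0 := by simpa using h4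
      rw [hAc, h5, zero_smul]
      exact Submodule.zero_mem _
    omega
  obtain ⟨Y, hY, hYi⟩ := exists_irr' τ ⊤ X hX (by
    intro h0
    rw [h0, finrank_bot] at hX3
    omega)
  obtain ⟨C, hC, hYC⟩ := exists_compl τ ⊤ Y hYi.2.1
  have h1 := Submodule.finrank_add_eq_of_isCompl hYC
  have hY2 := key Y hY hYi
  have h2 := Submodule.finrank_sup_add_finrank_inf_eq X C
  have h3 := Submodule.finrank_le (X ⊔ C)
  obtain ⟨Z, hZ, hZi⟩ := exists_irr' τ ⊤ (X ⊓ C) (hX.inf hC) (by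
    intro h0
    rw [h0, finrank_bot] at h2
    omega)
  have hZ2 := key Z (hZ.trans inf_le_left) hZi
  have h4 := Submodule.finrank_sup_add_finrank_inf_eq Y Z
  have h5 : Y ⊓ Z = ⊥ := by
    rw [eq_bot_iff, ← hYC.inf_eq_bot]
    exact inf_le_inf_left _ (hZ.trans inf_le_right)
  rw [h5, finrank_bot] at h4
  have h6 := Submodule.finrank_mono (sup_le hY (hZ.trans inf_le_left))
  omega

lemma perfect_two [Finite D] (hD : commutator D = ⊤) (hb : Bnd D 2) : ∀ d : D, d = 1 := by
  by_contra hne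
  push Not at hne
  obtain ⟨d0, hd0⟩ := hne
  have hex : ∃ P : Submodule ℂ (D → ℂ), IrrOn (rt D ℂ) ⊤ P ∧ ∃ d, ∃ f ∈ P, rt D ℂ d f ≠ f := by
    by_contra hc
    push Not at hc
    have key := maschke (rt D ℂ) ⊤ ⊤
      (⨅ x : D, LinearMap.ker (rt D ℂ x - LinearMap.id)) (inv_top _ _) (by
        intro y _ f hf
        simp only [Submodule.mem_iInf, LinearMap.mem_ker, LinearMap.sub_apply, LinearMap.id_apply,
          sub_eq_zero] at hf ⊢
        intro x
        rw [hf y, hf x]) (by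
        intro P hP hi f hf
        simp only [Submodule.mem_iInf, LinearMap.mem_ker, LinearMap.sub_apply, LinearMap.id_apply,
          sub_eq_zero]
        intro x
        exact hc P hi x f hf)
    classical
    have h1 := key (show (Pi.single 1 1 : D → ℂ) ∈ (⊤ : Submodule ℂ (D → ℂ)) from trivial)
    simp only [Submodule.mem_iInf, LinearMap.mem_ker, LinearMap.sub_apply, LinearMap.id_apply,
          sub_eq_zero] at h1
    have h2 := congrFun (h1 d0) 1
    rw [rt_apply, one_mul, Pi.single_eq_same, Pi.single_eq_of_ne hd0] at h2
    exact zero_ne_one h2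
  obtain ⟨P, hi, d1, f1, hf1, hne1⟩ := hex
  have hP2 := hb.irr hi
  have hP0 : Module.finrank ℂ P ≠ 0 := fun h0 => hi.1 (Submodule.finrank_eq_zero.mp h0)
  have hP1 : Module.finrank ℂ P ≠ 1 := fun h1 => hne1 (perfect_one hD _ P hi.2.1 h1 d1 f1 hf1)
  have hPd : Module.finrank ℂ P = 2 := by omega
  let σ : Representation ℂ D P :=
    { toFun := fun d => (rt D ℂ d).restrict (hi.2.1 d trivial)
      map_one' := by ext; simp
      map_mul' := fun a b => by ext; simp }
  have hσ : IrrOn σ ⊤ ⊤ := by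
    have h1 := hi.sub
    exact ⟨h1.1, inv_top _ _, fun W hW hWi => h1.2.2 W hW (fun d _ w hw => hWi d trivial w hw)⟩
  exact no_two hD hb σ hσ hPd

end two
end JT

namespace JT

open scoped commutatorElement

section main
variable {G : Type} [Group G] [Finite G]

lemma bnd_H {C : Subgroup G} [C.Normal] {m : ℕ} (hb : Bnd C m) (g : G)
    (hg : ∀ c ∈ C, c * g = g * c) : Bnd (C ⊔ Subgroup.zpowers g : Subgroup G) m := by
  set H := C ⊔ Subgroup.zpowers g with hH
  have hHg : H ≤ Subgroup.centralizer {g} := by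
    refine sup_le ?_ ?_
    · intro c hc
      rw [Subgroup.mem_centralizer_singleton_iff]; exact hg c hc
    · rw [Subgroup.zpowers_le, Subgroup.mem_centralizer_singleton_iff]
  have hgH : g ∈ H := (le_sup_right : Subgroup.zpowers g ≤ H) (Subgroup.mem_zpowers g)
  have hCH : C ≤ H := le_sup_left
  have hb' : Bnd (C.subgroupOf H) m := hb.of_mulEquiv (Subgroup.subgroupOfEquivOfLe hCH).symm
  intro V _ _ _ ρ hρ
  have hs : (⟨g, hgH⟩ : H) ∈ scal ρ := by
    refine schur hρ (ρ ⟨g, hgH⟩) ?_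
    intro x _ v
    have h1 := hHg x.2
    rw [Subgroup.mem_centralizer_singleton_iff] at h1
    rw [← rho_mul, ← rho_mul]
    congr 2
    exact Subtype.ext h1.symm
  have h1 : IrrOn ρ (C.subgroupOf H) ⊤ := by
    refine ⟨hρ.1, inv_top _ _, fun W hW hi => hρ.2.2 W hW ?_⟩
    rintro ⟨x, hx⟩ _ w hw
    obtain ⟨c, hc, z, hz, rfl⟩ := Subgroup.mem_sup_of_normal_left.mp hx
    obtain ⟨k, rfl⟩ := Subgroup.mem_zpowers_iff.mp hz
    have h2 : (⟨c * g ^ k, hx⟩ : H) = ⟨c, hCH hc⟩ * ⟨g, hgH⟩ ^ k := Subtype.ext (by simp)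
    rw [h2, rho_mul]
    obtain ⟨e, he⟩ := (scal ρ).zpow_mem hs k
    rw [he w, map_smul]
    exact W.smul_mem _ (hi _ (by rw [Subgroup.mem_subgroupOf]; exact hc) w hw)
  have h2 := hb'.sub h1
  rwa [finrank_top] at h2

lemma exists_sq (hD : commutator (commutator G) = ⊤) (hne : commutator G ≠ ⊥) :
    ∃ g ∈ commutator G, g ^ 2 ∉ Subgroup.centralizer (commutator G : Set G) := by
  by_contra hc
  push Not at hc
  set C := Subgroup.centralizer (commutator G : Set G) with hC
  apply perfect_not_le hD hne
  have h1 : ∀ a ∈ commutator G, ∀ b ∈ commutator G, ⁅a, b⁆ ∈ C := by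
    intro a ha b hb
    have h2 : ∀ x ∈ commutator G, (x : G ⧸ C) * x = 1 := fun x hx => by
      rw [← QuotientGroup.mk_mul, QuotientGroup.eq_one_iff, ← pow_two]; exact hc x hx
    have hA := h2 a ha
    have hB := h2 b hb
    have hAB := h2 _ (Subgroup.mul_mem _ ha hb)
    have h3 : ((⁅a, b⁆ : G) : G ⧸ C) = 1 := by
      rw [commutatorElement_def, QuotientGroup.mk_mul, QuotientGroup.mk_mul, QuotientGroup.mk_inv,
        QuotientGroup.mk_inv, inv_eq_of_mul_eq_one_left hA, inv_eq_of_mul_eq_one_left hB]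
      rw [← hAB, QuotientGroup.mk_mul]
      simp only [mul_assoc]
    exact (QuotientGroup.eq_one_iff _).mp h3
  have h2 : commutator (commutator G) ≤ C.subgroupOf (commutator G) := by
    refine Subgroup.commutator_le.mpr ?_
    intro a _ b _
    rw [Subgroup.mem_subgroupOf]
    exact h1 a a.2 b b.2
  rw [hD] at h2
  intro x hx
  have : (⟨x, hx⟩ : commutator G) ∈ C.subgroupOf (commutator G) := h2 (Subgroup.mem_top _)
  rwa [Subgroup.mem_subgroupOf] at this

lemma extend {K : Subgroup G} {A : Subgroup K} (hA : ∀ x ∈ A, ∀ y ∈ A, x * y = y * x) {a b N : ℕ}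
    (ha : A.index ≤ a) (hK : K.index ≤ b) (hN : a * b ≤ N) :
    ∃ A : Subgroup G, (∀ x ∈ A, ∀ y ∈ A, x * y = y * x) ∧ A.index ≤ N := by
  refine ⟨A.map K.subtype, ?_, ?_⟩
  · rintro _ ⟨x, hx, rfl⟩ _ ⟨y, hy, rfl⟩
    rw [← map_mul, ← map_mul, hA x hx y hy]
  · rw [Subgroup.index_map_subtype]
    exact (Nat.mul_le_mul ha hK).trans hN

end main

lemma fact_ineq (n : ℕ) (hn : 5 ≤ n) :
    (Nat.factorial (n / 2)) ^ 2 * n ^ 4 ≤ (Nat.factorial n) ^ 2 := by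
  have h1 : Nat.factorial (n / 2) ≤ Nat.factorial (n - 3) := Nat.factorial_le (by omega)
  obtain ⟨k, rfl⟩ : ∃ k, n = k + 3 := ⟨n - 3, by omega⟩
  have h2 : Nat.factorial (k + 3) = (k + 3) * ((k + 2) * ((k + 1) * Nat.factorial k)) := by
    rw [Nat.factorial_succ, Nat.factorial_succ, Nat.factorial_succ]
  simp only [Nat.add_sub_cancel] at h1
  have h3 : Nat.factorial ((k + 3) / 2) * (k + 3) ^ 2 ≤ Nat.factorial (k + 3) := by
    rw [h2]
    calc _ ≤ Nat.factorial k * (k + 3) ^ 2 := Nat.mul_le_mul_right _ h1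
      _ = (k + 3) * Nat.factorial k * (k + 3) := by ring
      _ ≤ (k + 3) * Nat.factorial k * ((k + 2) * (k + 1)) := Nat.mul_le_mul_left _ (by nlinarith)
      _ = _ := by ring
  calc _ = (Nat.factorial ((k + 3) / 2) * (k + 3) ^ 2) ^ 2 := by ring
    _ ≤ _ := Nat.pow_le_pow_left h3 2

theorem main (n : ℕ) : ∀ (G : Type) [Group G] [Finite G], Bnd G n →
    ∃ A : Subgroup G, (∀ x ∈ A, ∀ y ∈ A, x * y = y * x) ∧ A.index ≤ (Nat.factorial n) ^ 2 := by
  induction n using Nat.strong_induction_on with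
  | _ n ih =>
  intro G _ _ h
  by_contra hcon
  have hn := h.ne_zero
  have hne : commutator G ≠ ⊥ := by
    intro h0
    apply hcon
    refine ⟨⊤, fun x _ y _ => ?_, ?_⟩
    · rw [← commutatorElement_eq_one_iff_mul_comm, ← Subgroup.mem_bot, ← h0]
      exact Subgroup.commutator_mem_commutator trivial trivial
    · rw [Subgroup.index_top]
      exact Nat.one_le_pow _ _ (Nat.factorial_pos n)
  have hno : ∀ K : Subgroup G, K.index ≤ n ^ 2 → ¬ Bnd K (n - 1) := by
    intro K hK hB
    obtain ⟨A, hA, hAi⟩ := ih (n - 1) (by omega) K hB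
    apply hcon
    refine extend hA hAi hK (le_of_eq ?_)
    rw [← mul_pow, mul_comm, Nat.mul_factorial_pred (by omega)]
  have hD := case1' h hno
  have hCi := index_C h hno
  have hCb := bnd_C h hD hne
  set C := Subgroup.centralizer (commutator G : Set G) with hC
  have hcomm : ∀ g ∈ commutator G, ∀ c ∈ C, c * g = g * c := fun g hg c hc => by
    rw [hC, Subgroup.mem_centralizer_iff] at hc
    exact (hc g hg).symm
  have hnorm : C.Normal := inferInstance
  have hgH : ∀ g, g ∈ C ⊔ Subgroup.zpowers g := fun g =>
    (le_sup_right : Subgroup.zpowers g ≤ C ⊔ Subgroup.zpowers g) (Subgroup.mem_zpowers g)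
  have hne1 : ∀ g, g ∉ C → C.relIndex (C ⊔ Subgroup.zpowers g) ≠ 1 := fun g hg h1 => by
    rw [Subgroup.relIndex_eq_one] at h1
    exact hg (h1 (hgH g))
  have hne2 : ∀ g, g ^ 2 ∉ C → C.relIndex (C ⊔ Subgroup.zpowers g) ≠ 2 := fun g hg h1 => by
    have := Subgroup.sq_mem_of_index_two h1 ⟨g, hgH g⟩
    rw [Subgroup.mem_subgroupOf] at this
    exact hg this
  have hri : ∀ g, C.relIndex (C ⊔ Subgroup.zpowers g) * (C ⊔ Subgroup.zpowers g).index = C.index :=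
    fun g => Subgroup.relIndex_mul_index le_sup_left
  have hCi0 : C.index ≠ 0 := Subgroup.index_ne_zero_of_finite
  have hne0 : ∀ g, C.relIndex (C ⊔ Subgroup.zpowers g) ≠ 0 := fun g h1 => by
    have := hri g
    rw [h1, zero_mul] at this
    exact hCi0 this.symm
  have hfin : ∀ (K : Subgroup G) (b : ℕ), Bnd K (n / 2) → K.index ≤ b →
      (Nat.factorial (n / 2)) ^ 2 * b ≤ (Nat.factorial n) ^ 2 → False := by
    intro K b hK hKi hb
    obtain ⟨A, hA, hAi⟩ := ih (n / 2) (by omega) K hK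
    exact hcon (extend hA hAi hKi hb)
  obtain ⟨g, hgD, hg2⟩ := exists_sq hD hne
  have hg1 : g ∉ C := fun hg => hg2 (C.pow_mem hg 2)
  have hBH := bnd_H hCb g (hcomm g hgD)
  have h0 := hne0 g
  have h1 := hne1 g hg1
  have h2 := hne2 g hg2
  have h3 : 3 ≤ C.relIndex (C ⊔ Subgroup.zpowers g) := by omega
  have h4 := hri g
  have h5 : 3 * (C ⊔ Subgroup.zpowers g).index ≤ C.index := by
    rw [← h4]; exact Nat.mul_le_mul_right _ h3
  rcases lt_or_ge n 5 with hn5 | hn5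
  · interval_cases n
    · exact absurd hCb.ne_zero (by norm_num)
    · apply hne
      have h6 := perfect_two hD (h.subgroup _)
      rw [eq_bot_iff]
      intro x hx
      rw [Subgroup.mem_bot]
      exact congrArg Subtype.val (h6 ⟨x, hx⟩)
    · refine hfin _ 27 hBH (by omega) (by decide)
    · refine hfin _ 128 hBH (by omega) (by decide)
  · exact hfin C _ hCb hCi (fact_ineq n hn5)

end JT


open CategoryTheory

/-- If every irreducible complex representation of a finite group `G` has degree at
most `r`, then `G` has an abelian subgroup of index at most `(r!)²`. -/
theorem stmt_5 (G : Type) [Group G] [Finite G] (r : ℕ)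
    (h : ∀ V : FDRep ℂ G, Simple V → Module.finrank ℂ V ≤ r) :
    ∃ H : Subgroup G, (∀ x ∈ H, ∀ y ∈ H, x * y = y * x) ∧
      H.index ≤ (Nat.factorial r) ^ 2 := by
  apply JT.main
  intro V _ _ _ ρ hρ
  have hnt := hρ.nontrivial
  refine h (FDRep.of ρ) ?_
  have hc : NeZero (Nat.card G : ℂ) := ⟨by exact_mod_cast Nat.card_pos.ne'⟩
  rw [FDRep.simple_iff_end_is_rank_one]
  refine finrank_eq_one_iff'.mpr ⟨𝟙 (FDRep.of ρ), ?_, ?_⟩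
  · intro h0
    obtain ⟨v, hv⟩ := exists_ne (0 : V)
    apply hv
    have h1 : (𝟙 (FDRep.of ρ) : FDRep.of ρ ⟶ FDRep.of ρ).hom.hom.hom v
      = (0 : FDRep.of ρ ⟶ FDRep.of ρ).hom.hom.hom v := by rw [h0]
    exact h1
  · intro f
    obtain ⟨c, hc⟩ := JT.schur hρ (f.hom.hom.hom : V →ₗ[ℂ] V) (by
      intro g _ v
      have h1 := congrArg (fun z => z.hom.hom v) (f.comm g)
      exact h1)
    refine ⟨c, ?_⟩
    apply Action.Hom.ext
    apply InducedCategory.hom_ext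
    apply ModuleCat.hom_ext
    apply LinearMap.ext
    intro v
    exact (hc v).symm
end
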